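/- Let Ω ⊂ ℝⁿ be a nonempty open bounded convex set with inradius R_Ω. Then there exists a unique r* ∈ (0, R_Ω) such that |∂Ω_{r*}| / |Ω_{r*}| = 1/r*, where Ω_r denotes the inner parallel set at distance r. -/

import Mathlib

/-!
Write `V r` and `P r` for the volume and the perimeter of the inner parallel set `Ω_r`, and `R` for
the inradius. The equation to be solved is `r * (P r / V r) = 1`. It suffices that
`P / V` is positive, continuous and nondecreasing on `(0, R)` and grows at least like
`c / (R - r)`; then `r * (P r / V r)` is continuous and strictly increasing, is below one near `0`,
and reaches one before `R`.

* *Monotonicity* comes from log-concavity of `V`. Convexity of `Ω` makes the family `Ω_r` concave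
  in `r` (`par_combo`), and the Brunn–Minkowski inequality, obtained from Prékopa–Leindler
  (`volume_rpow_mul_le`), turns this into log-concavity. Since `V' = -P / c` for a constant
  `c > 0` depending only on the dimension, `P / V = -c (log V)'` is nondecreasing. The value of `c`
  depends on the normalisation of the Hausdorff measure and is irrelevant.

* *The derivative of `V`* is found by approximation with polytopes. The inner parallel bodies of a
  polytope are obtained by moving its facets, and splitting it into the cells of points nearest to
  a given facet reduces the coarea formula to slicing by parallel hyperplanes (`poly_coarea`).
  Perimeter is monotone under inclusion of convex sets (`hausdorffMeasure_frontier_mono`), so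
  `P b (b - a) ≤ c (V a - V b) ≤ P a (b - a)` for polytopes (`poly_bounds`), and a polytope
  squeezed between `Ω_ε` and `Ω` gives the same for `Ω` up to shifts by `ε` (`par_bounds`). The
  shifts disappear in the limit because `V` and `P` are continuous: they are nonincreasing, and a
  homothety argument (`par_scaling`) excludes jumps.

* *Growth near `R`* follows from the upper bound above as `b → R`, since `V b → 0`
  (`exists_vol_lt`).

The one-variable argument combining these facts is `existsUnique_of_parallel_bounds`.
-/

open MeasureTheory Metric Set Filter

noncomputable section

/-- The inner parallel set `Ω_r = {x ∈ Ω : dist(x, ∂Ω) > r}`. -/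
def innerParallel {n : ℕ} (Ω : Set (EuclideanSpace ℝ (Fin n))) (r : ℝ) :
    Set (EuclideanSpace ℝ (Fin n)) :=
  {x ∈ Ω | r < infDist x (frontier Ω)}

/-- The inradius `R_Ω = sup_{x ∈ Ω} dist(x, ∂Ω)`. -/
def inradius {n : ℕ} (Ω : Set (EuclideanSpace ℝ (Fin n))) : ℝ :=
  sSup ((fun x => infDist x (frontier Ω)) '' Ω)

/-- The perimeter of a set: the `(n-1)`-dimensional Hausdorff measure of its boundary. -/
def perim {n : ℕ} (A : Set (EuclideanSpace ℝ (Fin n))) : ℝ :=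
  (μH[(n : ℝ) - 1] (frontier A)).toReal

/-! ### The Prékopa–Leindler inequality -/

/-- One-dimensional Brunn–Minkowski inequality. For compact sets, the translates `K + min L` and
`max K + L` lie in `K + L` and overlap in one point; inner regularity does the rest. The target is
any set `S` containing `A + B`, so that no measurability of the Minkowski sum is needed. -/
theorem volume_add_volume_le {A B S : Set ℝ} (hA : MeasurableSet A) (hB : MeasurableSet B)
    (hAn : A.Nonempty) (hBn : B.Nonempty) (h : ∀ x ∈ A, ∀ y ∈ B, x + y ∈ S) :
    volume A + volume B ≤ volume S := by
  have key : ∀ K L : Set ℝ, IsCompact K → IsCompact L → K ⊆ A → L ⊆ B → K.Nonempty → L.Nonempty →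
      volume K + volume L ≤ volume S := by
    intro K L hK hL hKA hLB hKn hLn
    have ha := hK.sSup_mem hKn
    have hb := hL.sInf_mem hLn
    set p := sSup K
    set q := sInf L
    have hd : AEDisjoint volume ((· + q) '' K) ((p + ·) '' L) := by
      refine measure_mono_null (t := {p + q}) ?_ (by simp)
      rintro z ⟨⟨x, hx, rfl⟩, ⟨y, hy, hxy⟩⟩
      have h1 : x ≤ p := le_csSup hK.bddAbove hx
      have h2 : q ≤ y := csInf_le hL.bddBelow hy
      simp only at hxy
      simp only [mem_singleton_iff]
      linarith
    have hm : NullMeasurableSet ((p + ·) '' L) volume :=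
      (hL.image (by fun_prop)).measurableSet.nullMeasurableSet
    have := measure_union₀ hm hd
    have e1 : volume ((· + q) '' K) = volume K := by simp
    have e2 : volume ((p + ·) '' L) = volume L := by simp
    rw [← e1, ← e2, ← this]
    refine measure_mono (union_subset ?_ ?_)
    · rintro _ ⟨x, hx, rfl⟩; exact h _ (hKA hx) _ (hLB hb)
    · rintro _ ⟨x, hx, rfl⟩; exact h _ (hKA ha) _ (hLB hx)
  obtain ⟨x0, hx0⟩ := hAn
  obtain ⟨y0, hy0⟩ := hBn
  have key2 : ∀ K L : Set ℝ, IsCompact K → IsCompact L → K ⊆ A → L ⊆ B →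
      volume K + volume L ≤ volume S := by
    intro K L hK hL hKA hLB
    refine le_trans ?_ (key (insert x0 K) (insert y0 L) (hK.insert _) (hL.insert _)
      (insert_subset hx0 hKA) (insert_subset hy0 hLB) ⟨x0, by simp⟩ ⟨y0, by simp⟩)
    gcongr <;> simp
  -- inner regularity in one set at a time, which avoids subtracting infinities
  have key3 : ∀ L : Set ℝ, IsCompact L → L ⊆ B → volume A + volume L ≤ volume S := by
    intro L hL hLB
    have : volume A ≤ volume S - volume L := by
      refine le_of_forall_lt fun r hr => ?_
      obtain ⟨K, hKA, hK, hr⟩ := hA.exists_lt_isCompact hr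
      exact hr.trans_le (ENNReal.le_sub_of_add_le_right hL.measure_ne_top (key2 K L hK hL hKA hLB))
    have hle : volume L ≤ volume S := le_trans (by simp) (key2 ∅ L isCompact_empty hL (by simp) hLB)
    calc volume A + volume L ≤ (volume S - volume L) + volume L := by gcongr
      _ = volume S := tsub_add_cancel_of_le hle
  by_cases hAt : volume A = ⊤
  · have := key3 ∅ isCompact_empty (by simp)
    simp only [hAt, measure_empty, add_zero, top_le_iff] at this
    simp [this]
  · have : volume B ≤ volume S - volume A := by
      refine le_of_forall_lt fun r hr => ?_
      obtain ⟨L, hLB, hL, hr⟩ := hB.exists_lt_isCompact hr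
      refine hr.trans_le (ENNReal.le_sub_of_add_le_right hAt ?_)
      rw [add_comm]; exact key3 L hL hLB
    have hle : volume A ≤ volume S := le_trans (by simp) (key3 ∅ isCompact_empty (by simp))
    calc volume A + volume B ≤ volume A + (volume S - volume A) := by gcongr
      _ = volume S := add_tsub_cancel_of_le hle

theorem ennreal_geom_le_arith {a b : ℝ} (ha : 0 < a) (hb : 0 < b) (hab : a + b = 1)
    (x y : ENNReal) : x ^ a * y ^ b ≤ ENNReal.ofReal a * x + ENNReal.ofReal b * y := by
  have ha' : ENNReal.ofReal a ≠ 0 := by simpa using ha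
  have hb' : ENNReal.ofReal b ≠ 0 := by simpa using hb
  by_cases hx : x = ⊤
  · simp [hx, ENNReal.mul_top ha']
  by_cases hy : y = ⊤
  · simp [hy, ENNReal.mul_top hb']
  lift x to NNReal using hx
  lift y to NNReal using hy
  have := NNReal.geom_mean_le_arith_mean2_weighted a.toNNReal b.toNNReal x y
    (by rw [← Real.toNNReal_add ha.le hb.le, hab, Real.toNNReal_one])
  rw [Real.coe_toNNReal _ ha.le, Real.coe_toNNReal _ hb.le] at this
  rw [← ENNReal.coe_rpow_of_nonneg _ ha.le, ← ENNReal.coe_rpow_of_nonneg _ hb.le]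
  simp only [ENNReal.ofReal]
  exact_mod_cast this

/-- Layer-cake formula for `ENNReal`-valued functions bounded by one. -/
theorem lintegral_eq_layercake {α : Type*} [MeasurableSpace α] (μ : Measure α)
    {f : α → ENNReal} (hf : Measurable f) (hft : ∀ x, f x ≤ 1) :
    ∫⁻ x, f x ∂μ = ∫⁻ l in Ioi (0:ℝ), μ {x | ENNReal.ofReal l < f x} := by
  have hne : ∀ x, f x ≠ ⊤ := fun x => ((hft x).trans_lt ENNReal.one_lt_top).ne
  have := lintegral_eq_lintegral_meas_lt μ (f := fun x => (f x).toReal)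
    (Eventually.of_forall fun x => ENNReal.toReal_nonneg) hf.ennreal_toReal.aemeasurable
  simp only [ENNReal.ofReal_toReal (hne _)] at this
  rw [this]
  refine setLIntegral_congr_fun measurableSet_Ioi fun l hl => ?_
  congr 1
  ext x
  simp only [mem_ofPred_eq]
  rw [ENNReal.ofReal_lt_iff_lt_toReal (le_of_lt hl) (hne x)]

/-- Prékopa–Leindler on the line for functions of supremum one, in its stronger arithmetic form:
every superlevel set of `h` at a height below one contains the corresponding combination of the
superlevel sets of `f` and `g`, both nonempty, so Brunn–Minkowski applies at each height. -/
theorem prekopa_leindler_one_aux {a b : ℝ} (ha : 0 < a) (hb : 0 < b) (hab : a + b = 1)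
    {f g h : ℝ → ENNReal} (hf : Measurable f) (hg : Measurable g) (hh : Measurable h)
    (hf1 : ⨆ x, f x = 1) (hg1 : ⨆ x, g x = 1)
    (H : ∀ x y, f x ^ a * g y ^ b ≤ h (a * x + b * y)) :
    ENNReal.ofReal a * (∫⁻ x, f x) + ENNReal.ofReal b * (∫⁻ x, g x) ≤ ∫⁻ x, h x := by
  have hf1' : ∀ x, f x ≤ 1 := fun x => hf1 ▸ le_iSup f x
  have hg1' : ∀ x, g x ≤ 1 := fun x => hg1 ▸ le_iSup g x
  calc _ = ∫⁻ l in Ioi (0:ℝ), (ENNReal.ofReal a * volume {x | ENNReal.ofReal l < f x} +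
        ENNReal.ofReal b * volume {x | ENNReal.ofReal l < g x}) := by
        have hanti : ∀ f : ℝ → ENNReal, Antitone fun l : ℝ => volume {x | ENNReal.ofReal l < f x} := by
          intro f l m hlm
          exact measure_mono fun x hx => lt_of_le_of_lt (ENNReal.ofReal_le_ofReal hlm) hx
        rw [lintegral_add_left ((hanti f).measurable.const_mul _),
          lintegral_const_mul _ (hanti f).measurable, lintegral_const_mul _ (hanti g).measurable,
          lintegral_eq_layercake volume hf hf1', lintegral_eq_layercake volume hg hg1']
    _ ≤ ∫⁻ l in Ioi (0:ℝ), volume {x | ENNReal.ofReal l < min (h x) 1} := by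
        refine setLIntegral_mono' measurableSet_Ioi fun l hl => ?_
        by_cases hl1 : 1 ≤ l
        · have h1 : ∀ f : ℝ → ENNReal, (∀ x, f x ≤ 1) → {x | ENNReal.ofReal l < f x} = ∅ := by
            intro f hf
            ext x
            simp only [mem_ofPred_eq, mem_empty_iff_false, iff_false, not_lt]
            exact (hf x).trans (by simpa using hl1)
          simp [h1 f hf1', h1 g hg1']
        push Not at hl1
        have hl1' : ENNReal.ofReal l < 1 := by simpa using hl1
        have hl0 : ENNReal.ofReal l ≠ 0 := by simpa using hl
        have fn : {x | ENNReal.ofReal l < f x}.Nonempty := by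
          rw [← hf1] at hl1'; exact lt_iSup_iff.1 hl1'
        have gn : {x | ENNReal.ofReal l < g x}.Nonempty := by
          rw [← hg1] at hl1'; exact lt_iSup_iff.1 hl1'
        have e : ∀ (c : ℝ), 0 < c → ∀ s : Set ℝ, ENNReal.ofReal c * volume s
            = volume ((c * ·) '' s) := by
          intro c hc s
          have := Measure.addHaar_smul (volume : Measure ℝ) c s
          simp only [Module.finrank_self, pow_one, abs_of_pos hc] at this
          rw [← this]; rfl
        rw [e a ha, e b hb]
        refine volume_add_volume_le ?_ ?_ (fn.image _) (gn.image _) ?_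
        · exact (measurableEmbedding_mulLeft₀ ha.ne').measurableSet_image.2
            (measurableSet_lt measurable_const hf)
        · exact (measurableEmbedding_mulLeft₀ hb.ne').measurableSet_image.2
            (measurableSet_lt measurable_const hg)
        · rintro _ ⟨x, hx, rfl⟩ _ ⟨y, hy, rfl⟩
          simp only [mem_ofPred_eq] at hx hy ⊢
          refine lt_min (lt_of_lt_of_le ?_ (H x y)) hl1'
          calc ENNReal.ofReal l = ENNReal.ofReal l ^ a * ENNReal.ofReal l ^ b := by
                rw [← ENNReal.rpow_add _ _ hl0 ENNReal.ofReal_ne_top, hab, ENNReal.rpow_one]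
            _ < f x ^ a * g y ^ b := ENNReal.mul_lt_mul (ENNReal.rpow_lt_rpow hx ha)
                (ENNReal.rpow_lt_rpow hy hb)
    _ = ∫⁻ x, min (h x) 1 := (lintegral_eq_layercake volume (hh.min measurable_const)
          (fun x => min_le_right _ _)).symm
    _ ≤ _ := lintegral_mono fun x => min_le_left _ _

/-- Prékopa–Leindler on the line for bounded functions, by scaling both suprema to one. -/
theorem prekopa_leindler_one_bdd {a b : ℝ} (ha : 0 < a) (hb : 0 < b) (hab : a + b = 1)
    {f g h : ℝ → ENNReal} (hf : Measurable f) (hg : Measurable g) (hh : Measurable h)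
    (hft : ⨆ x, f x ≠ ⊤) (hgt : ⨆ x, g x ≠ ⊤)
    (H : ∀ x y, f x ^ a * g y ^ b ≤ h (a * x + b * y)) :
    (∫⁻ x, f x) ^ a * (∫⁻ x, g x) ^ b ≤ ∫⁻ x, h x := by
  set M := ⨆ x, f x with hM
  set N := ⨆ x, g x with hN
  by_cases hM0 : M = 0
  · have : ∀ x, f x = 0 := fun x => le_antisymm (hM0 ▸ le_iSup f x) bot_le
    simp [this, ENNReal.zero_rpow_of_pos ha]
  by_cases hN0 : N = 0
  · have : ∀ x, g x = 0 := fun x => le_antisymm (hN0 ▸ le_iSup g x) bot_le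
    simp [this, ENNReal.zero_rpow_of_pos hb]
  have hMi : M⁻¹ ≠ ⊤ := ENNReal.inv_ne_top.2 hM0
  have hNi : N⁻¹ ≠ ⊤ := ENNReal.inv_ne_top.2 hN0
  set c := (M⁻¹) ^ a * (N⁻¹) ^ b with hc
  have hc0 : c ≠ 0 := by
    refine mul_ne_zero ?_ ?_
    · exact (ENNReal.rpow_pos (ENNReal.inv_pos.2 hft) hMi).ne'
    · exact (ENNReal.rpow_pos (ENNReal.inv_pos.2 hgt) hNi).ne'
  have hct : c ≠ ⊤ := ENNReal.mul_ne_top (ENNReal.rpow_ne_top_of_nonneg ha.le hMi)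
    (ENNReal.rpow_ne_top_of_nonneg hb.le hNi)
  have key := prekopa_leindler_one_aux ha hb hab (f := fun x => M⁻¹ * f x)
    (g := fun x => N⁻¹ * g x) (h := fun x => c * h x) (hf.const_mul _) (hg.const_mul _)
    (hh.const_mul _) (by rw [← ENNReal.mul_iSup]; exact ENNReal.inv_mul_cancel hM0 hft)
    (by rw [← ENNReal.mul_iSup]; exact ENNReal.inv_mul_cancel hN0 hgt) (by
      intro x y
      rw [ENNReal.mul_rpow_of_nonneg _ _ ha.le, ENNReal.mul_rpow_of_nonneg _ _ hb.le,
        mul_mul_mul_comm]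
      gcongr
      exact H x y)
  have key2 := (ennreal_geom_le_arith ha hb hab _ _).trans key
  rw [lintegral_const_mul _ hf, lintegral_const_mul _ hg, lintegral_const_mul _ hh,
    ENNReal.mul_rpow_of_nonneg _ _ ha.le, ENNReal.mul_rpow_of_nonneg _ _ hb.le,
    mul_mul_mul_comm] at key2
  exact (ENNReal.mul_le_mul_iff_right hc0 hct).1 key2

/-- Prékopa–Leindler on the line, by truncating `f` and `g` at height `k → ∞`. -/
theorem prekopa_leindler_one {a b : ℝ} (ha : 0 < a) (hb : 0 < b) (hab : a + b = 1)
    {f g h : ℝ → ENNReal} (hf : Measurable f) (hg : Measurable g) (hh : Measurable h)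
    (H : ∀ x y, f x ^ a * g y ^ b ≤ h (a * x + b * y)) :
    (∫⁻ x, f x) ^ a * (∫⁻ x, g x) ^ b ≤ ∫⁻ x, h x := by
  by_cases hf0 : ∫⁻ x, f x = 0
  · simp [hf0, ENNReal.zero_rpow_of_pos ha]
  by_cases hg0 : ∫⁻ x, g x = 0
  · simp [hg0, ENNReal.zero_rpow_of_pos hb]
  have T : ∀ f : ℝ → ENNReal, Measurable f →
      Tendsto (fun k : ℕ => ∫⁻ x, min (f x) k) atTop (nhds (∫⁻ x, f x)) := by
    intro f hf
    refine lintegral_tendsto_of_tendsto_of_monotone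
      (fun k => (hf.min measurable_const).aemeasurable) (Eventually.of_forall fun x k l hkl => ?_)
      (Eventually.of_forall fun x => ?_)
    · exact min_le_min le_rfl (by exact_mod_cast hkl)
    · have : Tendsto (fun k : ℕ => min (f x) (k : ENNReal)) atTop (nhds (min (f x) ⊤)) :=
        tendsto_const_nhds.min ENNReal.tendsto_nat_nhds_top
      simpa using this
  have hne : ∀ (I : ENNReal) (c : ℝ), 0 < c → I ≠ 0 → I ^ c ≠ 0 := by
    intro I c hc hI h0
    rcases ENNReal.rpow_eq_zero_iff.1 h0 with h | h
    · exact hI h.1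
    · linarith [h.2]
  have lim := ENNReal.Tendsto.mul ((ENNReal.continuous_rpow_const (y := a)).continuousAt.tendsto.comp (T f hf))
    (Or.inl (hne _ _ ha hf0)) ((ENNReal.continuous_rpow_const (y := b)).continuousAt.tendsto.comp (T g hg)) (Or.inl (hne _ _ hb hg0))
  refine le_of_tendsto' lim fun k => ?_
  have bd : ∀ f : ℝ → ENNReal, ⨆ x, min (f x) (k : ENNReal) ≠ ⊤ := fun f =>
    ((iSup_le fun x => min_le_right _ _).trans_lt (ENNReal.natCast_lt_top k)).ne
  refine prekopa_leindler_one_bdd ha hb hab (hf.min measurable_const) (hg.min measurable_const) hh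
    (bd f) (bd g) fun x y => le_trans ?_ (H x y)
  gcongr <;> exact min_le_left _ _

theorem lintegral_fin_succ {m : ℕ} {f : (Fin (m + 1) → ℝ) → ENNReal} (hf : Measurable f) :
    ∫⁻ x, f x = ∫⁻ s : ℝ, ∫⁻ y : Fin m → ℝ, f (Fin.cons s y) := by
  have mp := (volume_preserving_piFinSuccAbove (fun _ : Fin (m + 1) => ℝ) 0).symm
  rw [← mp.lintegral_comp hf, Measure.volume_eq_prod, lintegral_prod]
  · simp [MeasurableEquiv.piFinSuccAbove, Fin.insertNthEquiv]
  · exact (hf.comp mp.measurable).aemeasurable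

theorem measurable_cons {m : ℕ} :
    Measurable fun p : ℝ × (Fin m → ℝ) => (Fin.cons p.1 p.2 : Fin (m + 1) → ℝ) := by
  convert (MeasurableEquiv.piFinSuccAbove (fun _ : Fin (m + 1) => ℝ) 0).symm.measurable using 1
  ext p
  simp [MeasurableEquiv.piFinSuccAbove, Fin.insertNthEquiv]

/-- Prékopa–Leindler inequality on `Fin n → ℝ`, by induction on `n`: the one-dimensional case is
applied to the integrals over the slices. -/
theorem prekopa_leindler {a b : ℝ} (ha : 0 < a) (hb : 0 < b) (hab : a + b = 1) (n : ℕ) :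
    ∀ {f g h : (Fin n → ℝ) → ENNReal}, Measurable f → Measurable g → Measurable h →
    (∀ x y, f x ^ a * g y ^ b ≤ h (a • x + b • y)) →
    (∫⁻ x, f x) ^ a * (∫⁻ x, g x) ^ b ≤ ∫⁻ x, h x := by
  induction n with
  | zero =>
    intro f g h hf hg hh H
    simp only [volume_pi, Measure.pi_of_empty (x := fun i : Fin 0 => (0 : ℝ)),
      lintegral_dirac]
    convert H _ _ using 2
  | succ m ih =>
    intro f g h hf hg hh H
    rw [lintegral_fin_succ hf, lintegral_fin_succ hg, lintegral_fin_succ hh]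
    refine prekopa_leindler_one ha hb hab
      (hf.comp measurable_cons).lintegral_prod_right'
      (hg.comp measurable_cons).lintegral_prod_right'
      (hh.comp measurable_cons).lintegral_prod_right' fun s s' => ?_
    have mc : ∀ s : ℝ, Measurable fun y : Fin m → ℝ => (Fin.cons s y : Fin (m + 1) → ℝ) :=
      fun s => measurable_cons.comp (measurable_const.prodMk measurable_id)
    refine ih (hf.comp (mc s)) (hg.comp (mc s')) (hh.comp (mc _)) fun y y' => ?_
    convert H (Fin.cons s y) (Fin.cons s' y') using 2
    ext i
    refine Fin.cases ?_ (fun j => ?_) i <;> simp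

/-- Multiplicative Brunn–Minkowski inequality. -/
theorem volume_rpow_mul_le {n : ℕ} {a b : ℝ} (ha : 0 < a) (hb : 0 < b) (hab : a + b = 1)
    {A B S : Set (EuclideanSpace ℝ (Fin n))} (hA : MeasurableSet A) (hB : MeasurableSet B)
    (hS : MeasurableSet S) (H : ∀ x ∈ A, ∀ y ∈ B, a • x + b • y ∈ S) :
    volume A ^ a * volume B ^ b ≤ volume S := by
  have mp := PiLp.volume_preserving_toLp (Fin n)
  have e : ∀ A : Set (EuclideanSpace ℝ (Fin n)), MeasurableSet A →
      volume A = ∫⁻ x, (WithLp.toLp 2 ⁻¹' A).indicator (fun _ : Fin n → ℝ => (1 : ENNReal)) x := by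
    intro A hA
    rw [lintegral_indicator (mp.measurable hA), setLIntegral_one,
      mp.measure_preimage hA.nullMeasurableSet]
  have me : ∀ A : Set (EuclideanSpace ℝ (Fin n)), MeasurableSet A → Measurable
      ((WithLp.toLp 2 ⁻¹' A).indicator (fun _ : Fin n → ℝ => (1 : ENNReal))) := fun A hA =>
    measurable_const.indicator (mp.measurable hA)
  rw [e A hA, e B hB, e S hS]
  refine prekopa_leindler ha hb hab n (me A hA) (me B hB) (me S hS) fun x y => ?_
  by_cases hx : x ∈ WithLp.toLp 2 ⁻¹' A
  · by_cases hy : y ∈ WithLp.toLp 2 ⁻¹' B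
    · have : a • x + b • y ∈ WithLp.toLp 2 ⁻¹' S := H _ hx _ hy
      rw [indicator_of_mem hx, indicator_of_mem hy, indicator_of_mem this]; simp
    · simp [indicator_of_notMem hy, ENNReal.zero_rpow_of_pos hb]
  · simp [indicator_of_notMem hx, ENNReal.zero_rpow_of_pos ha]

/-! ### Slicing by parallel hyperplanes -/

/-- Fubini along the hyperplanes orthogonal to a unit vector `u`: the slice at height `τ` is
parametrised isometrically by `J τ`. -/
theorem exists_slicing {m : ℕ} (u : EuclideanSpace ℝ (Fin (m + 1))) (hu : ‖u‖ = 1) :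
    ∃ J : ℝ → EuclideanSpace ℝ (Fin m) → EuclideanSpace ℝ (Fin (m + 1)),
      (∀ τ, Isometry (J τ)) ∧ (∀ τ, range (J τ) = {x | inner ℝ u x = τ}) ∧
      ∀ S, MeasurableSet S → Measurable (fun τ => volume (J τ ⁻¹' S)) ∧
        volume S = ∫⁻ τ, volume (J τ ⁻¹' S) := by
  obtain ⟨b, hb⟩ := Orthonormal.exists_orthonormalBasis_extension_of_card_eq (𝕜 := ℝ)
    (E := EuclideanSpace ℝ (Fin (m + 1))) (ι := Fin (m + 1)) (by simp) (v := fun _ => u) (s := {0})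
    (by
      constructor
      · intro i; simpa using hu
      · intro i j hij; exact absurd (Subsingleton.elim i j) hij)
  have hb0 : b 0 = u := hb 0 rfl
  refine ⟨fun τ y => b.repr.symm (WithLp.toLp 2 (Fin.cons τ y.ofLp)), ?_, ?_, ?_⟩
  · intro τ
    refine b.repr.symm.isometry.comp (Isometry.of_dist_eq fun x y => ?_)
    simp [EuclideanSpace.dist_eq, Fin.sum_univ_succ]
  · intro τ
    ext x
    simp only [mem_range, mem_ofPred_eq]
    have h0 : inner ℝ u x = b.repr x 0 := by rw [b.repr_apply_apply, hb0]
    rw [h0]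
    constructor
    · rintro ⟨y, rfl⟩; simp
    · intro h
      refine ⟨WithLp.toLp 2 (Fin.tail (b.repr x).ofLp), ?_⟩
      rw [← h]
      simp
  · intro S hS
    have mp : MeasurePreserving (fun x : Fin (m + 1) → ℝ => b.repr.symm (WithLp.toLp 2 x)) :=
      b.repr.symm.measurePreserving.comp (PiLp.volume_preserving_toLp (Fin (m + 1)))
    have mp' := PiLp.volume_preserving_toLp (Fin m)
    have hms := mp.measurable hS
    have e : ∀ τ : ℝ, volume ((fun y : EuclideanSpace ℝ (Fin m) =>
        b.repr.symm (WithLp.toLp 2 (Fin.cons τ y.ofLp : Fin (m + 1) → ℝ))) ⁻¹' S) =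
        ∫⁻ y : Fin m → ℝ, ((fun x : Fin (m + 1) → ℝ => b.repr.symm (WithLp.toLp 2 x)) ⁻¹' S).indicator
          (1 : (Fin (m + 1) → ℝ) → ENNReal) (Fin.cons τ y) := by
      intro τ
      have hJ : Measurable fun y : EuclideanSpace ℝ (Fin m) =>
          b.repr.symm (WithLp.toLp 2 (Fin.cons τ y.ofLp : Fin (m + 1) → ℝ)) := by
        refine mp.measurable.comp (measurable_cons.comp (measurable_const.prodMk ?_))
        fun_prop
      rw [← mp'.measure_preimage (hJ hS).nullMeasurableSet,
        ← lintegral_indicator_one (mp'.measurable (hJ hS))]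
      rfl
    simp only [e]
    refine ⟨((measurable_one.indicator hms).comp measurable_cons).lintegral_prod_right', ?_⟩
    rw [← mp.measure_preimage hS.nullMeasurableSet, ← lintegral_indicator_one hms,
      lintegral_fin_succ (measurable_one.indicator hms)]

/-- Cavalieri's principle with slices measured by `μH[m]`. The constant `c` compares `μH[m]` with
Lebesgue measure on an `m`-dimensional Euclidean space; only its independence of `u` and `S`, its
positivity and its finiteness matter. -/
theorem exists_hausdorff_slicing (m : ℕ) : ∃ c : ENNReal, c ≠ 0 ∧ c ≠ ⊤ ∧
    ∀ u : EuclideanSpace ℝ (Fin (m + 1)), ‖u‖ = 1 → ∀ S, MeasurableSet S →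
      Measurable (fun τ : ℝ => μH[(m : ℝ)] (S ∩ {x | inner ℝ u x = τ})) ∧
      c * volume S = ∫⁻ τ : ℝ, μH[(m : ℝ)] (S ∩ {x | inner ℝ u x = τ}) := by
  have hH : (μH[(m : ℝ)] : Measure (EuclideanSpace ℝ (Fin m))).IsAddHaarMeasure := by
    have := MeasureTheory.isAddHaarMeasure_hausdorffMeasure (E := EuclideanSpace ℝ (Fin m))
    simpa using this
  set ν : Measure (EuclideanSpace ℝ (Fin m)) := μH[(m : ℝ)] with hν
  refine ⟨ν.addHaarScalarFactor volume, ?_, ENNReal.coe_ne_top, fun u hu S hS => ?_⟩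
  · simpa using (Measure.addHaarScalarFactor_pos_of_isAddHaarMeasure ν volume).ne'
  obtain ⟨J, hJ1, hJ2, hJ3⟩ := exists_slicing u hu
  have e := Measure.isAddLeftInvariant_eq_smul ν (volume : Measure (EuclideanSpace ℝ (Fin m)))
  have e2 : ∀ τ : ℝ, μH[(m : ℝ)] (S ∩ {x | inner ℝ u x = τ}) =
      (ν.addHaarScalarFactor volume : ENNReal) * volume (J τ ⁻¹' S) := by
    intro τ
    rw [← hJ2, ← (hJ1 τ).hausdorffMeasure_preimage (Or.inl (by positivity)), ← hν]
    conv_lhs => rw [e]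
    rfl
  simp only [e2]
  refine ⟨(hJ3 S hS).1.const_mul _, ?_⟩
  rw [(hJ3 S hS).2, ← lintegral_const_mul' _ _ ENNReal.coe_ne_top]

theorem hausdorffMeasure_slice_lt_top {m : ℕ} (u : EuclideanSpace ℝ (Fin (m + 1))) (hu : ‖u‖ = 1)
    (τ : ℝ) {S : Set (EuclideanSpace ℝ (Fin (m + 1)))} (hS : Bornology.IsBounded S)
    (h : S ⊆ {x | inner ℝ u x = τ}) : μH[(m : ℝ)] S < ⊤ := by
  have hH : (μH[(m : ℝ)] : Measure (EuclideanSpace ℝ (Fin m))).IsAddHaarMeasure := by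
    have := MeasureTheory.isAddHaarMeasure_hausdorffMeasure (E := EuclideanSpace ℝ (Fin m))
    simpa using this
  obtain ⟨J, hJ1, hJ2, -⟩ := exists_slicing u hu
  have : S = S ∩ range (J τ) := by rw [hJ2, inter_eq_left.2 h]
  rw [this, ← (hJ1 τ).hausdorffMeasure_preimage (Or.inl (by positivity))]
  exact ((hJ1 τ).antilipschitz.isBounded_preimage hS).measure_lt_top

/-! ### Monotonicity of the perimeter -/

theorem exists_unit_inner_lt {E : Type*} [NormedAddCommGroup E] [InnerProductSpace ℝ E]
    [CompleteSpace E] {A : Set E} (hA : IsOpen A) (hAc : Convex ℝ A) (hAn : A.Nonempty) {y : E}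
    (hy : y ∉ A) : ∃ u : E, ‖u‖ = 1 ∧ ∀ a ∈ A, inner ℝ u a < inner ℝ u y := by
  obtain ⟨f, hf⟩ := geometric_hahn_banach_open_point hAc hA hy
  set v := (InnerProductSpace.toDual ℝ E).symm f with hv
  have hvf : ∀ x, inner ℝ v x = f x := fun x => by simp [hv]
  have hv0 : v ≠ 0 := by
    intro h
    obtain ⟨a, ha⟩ := hAn
    have := hf a ha
    rw [← hvf, ← hvf, h] at this
    simp at this
  have hn : 0 < ‖v‖ := norm_pos_iff.2 hv0
  refine ⟨(‖v‖⁻¹ : ℝ) • v, by rw [norm_smul, norm_inv, norm_norm, inv_mul_cancel₀ hn.ne'],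
    fun a ha => ?_⟩
  rw [real_inner_smul_left, real_inner_smul_left, hvf, hvf]
  exact mul_lt_mul_of_pos_left (hf a ha) (inv_pos.2 hn)

theorem isPreconnected_subset_of_disjoint_frontier {X : Type*} [TopologicalSpace X] {T B : Set X}
    (hT : IsPreconnected T) (hB : IsOpen B) (hTB : (T ∩ B).Nonempty)
    (h : ∀ x ∈ T, x ∉ frontier B) : T ⊆ B := by
  refine hT.subset_of_closure_inter_subset hB hTB ?_
  rintro x ⟨hx, hxT⟩
  by_contra hxB
  exact h x hxT (by rw [hB.frontier_eq]; exact ⟨hx, hxB⟩)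

/-- Monotonicity of the perimeter: if a convex open set `A` lies in a bounded open set `B`, then
`∂A` has at most the Hausdorff measure of `∂B`. Moving each point of `∂A` along an outer normal
until it meets `∂B` gives a map `∂A → ∂B` that does not decrease distances (it is a right inverse
of the nearest-point projection onto `closure A`). -/
theorem hausdorffMeasure_frontier_mono {E : Type*} [NormedAddCommGroup E] [InnerProductSpace ℝ E]
    [CompleteSpace E] [MeasurableSpace E] [BorelSpace E] {d : ℝ} (hd : 0 ≤ d) {A B : Set E}
    (hA : IsOpen A) (hAc : Convex ℝ A) (hAn : A.Nonempty) (hB : IsOpen B)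
    (hBb : Bornology.IsBounded B) (hAB : A ⊆ B) :
    μH[d] (frontier A) ≤ μH[d] (frontier B) := by
  have ex : ∀ y : frontier A, ∃ z ∈ frontier B, ∀ a ∈ closure A, inner ℝ (z - y) (a - y) ≤ 0 := by
    rintro ⟨y, hy⟩
    have hy' := hy
    rw [hA.frontier_eq] at hy'
    obtain ⟨u, hu, hlt⟩ := exists_unit_inner_lt hA hAc hAn hy'.2
    have hle : ∀ a ∈ closure A, inner ℝ u a ≤ inner ℝ u y := by
      intro a ha
      have hc : IsClosed {a : E | inner ℝ u a ≤ inner ℝ u y} :=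
        isClosed_le (by fun_prop) continuous_const
      exact closure_minimal (fun a ha => (hlt a ha).le) hc ha
    have key : ∃ τ : ℝ, 0 ≤ τ ∧ y + τ • u ∈ frontier B := by
      by_cases hyB : y ∈ B
      · by_contra! hcon
        have hsub : (fun τ : ℝ => y + τ • u) '' Ici 0 ⊆ B := by
          refine isPreconnected_subset_of_disjoint_frontier ?_ hB ⟨y, ⟨0, by simp, by simp⟩, hyB⟩ ?_
          · exact isPreconnected_Ici.image _ (by fun_prop)
          · rintro _ ⟨τ, hτ, rfl⟩; exact hcon τ hτ
        obtain ⟨C, hC⟩ := hBb.subset_closedBall y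
        have := hC (hsub ⟨|C| + 1, by simp; positivity, rfl⟩)
        rw [mem_closedBall, dist_eq_norm, add_sub_cancel_left, norm_smul, hu, mul_one,
          Real.norm_eq_abs, abs_of_pos (by positivity)] at this
        linarith [le_abs_self C]
      · refine ⟨0, le_rfl, ?_⟩
        rw [hB.frontier_eq, zero_smul, add_zero]
        exact ⟨closure_mono hAB hy'.1, hyB⟩
    obtain ⟨τ, hτ, hz⟩ := key
    refine ⟨_, hz, fun a ha => ?_⟩
    rw [add_sub_cancel_left, real_inner_smul_left, inner_sub_right]
    exact mul_nonpos_of_nonneg_of_nonpos hτ (by linarith [hle a ha])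
  choose F hF1 hF2 using ex
  -- with `p, q ∈ ∂A`, the two normal-cone inequalities give
  -- `‖p - q‖² ≤ ⟪F p - F q, p - q⟫`, and Cauchy–Schwarz concludes
  have hanti : AntilipschitzWith 1 F := by
    refine AntilipschitzWith.of_le_mul_dist fun y y' => ?_
    rw [NNReal.coe_one, one_mul, Subtype.dist_eq, dist_eq_norm, dist_eq_norm]
    set p : E := y.1
    set q : E := y'.1
    have h1 : inner ℝ (F y - p) (q - p) ≤ 0 := hF2 y q (frontier_subset_closure y'.2)
    have h2 : inner ℝ (F y' - q) (p - q) ≤ 0 := hF2 y' p (frontier_subset_closure y.2)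
    have h3 : ‖p - q‖ * ‖p - q‖ ≤ inner ℝ (F y - F y') (p - q) := by
      rw [← real_inner_self_eq_norm_mul_norm]
      have e : F y - F y' = (F y - p) + (p - q) - (F y' - q) := by abel
      have e2 : inner ℝ (F y - p) (q - p) = - inner ℝ (F y - p) (p - q) := by
        rw [← inner_neg_right, neg_sub]
      rw [e, inner_sub_left (F y - p + (p - q)), inner_add_left]
      linarith
    by_contra! hlt
    have h4 := real_inner_le_norm (F y - F y') (p - q)
    have h5 : 0 < ‖p - q‖ := lt_of_le_of_lt (norm_nonneg _) hlt
    nlinarith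
  have h1 := hanti.le_hausdorffMeasure_image hd univ
  rw [ENNReal.coe_one, ENNReal.one_rpow, one_mul,
    ← isometry_subtype_coe.hausdorffMeasure_image (Or.inl hd), image_univ,
    Subtype.range_coe] at h1
  exact h1.trans (measure_mono (by rintro _ ⟨y, -, rfl⟩; exact hF1 y))

/-! ### Coarea inequalities for polytopes -/

section polytope

variable {E : Type*} [NormedAddCommGroup E] [InnerProductSpace ℝ E] {k : ℕ}

/-- The signed distance `h i - ⟪u i, x⟫` from `x` to the `i`-th supporting hyperplane, positive on
the inner side (for `‖u i‖ = 1`). -/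
def slack (u : Fin k → E) (h : Fin k → ℝ) (i : Fin k) (x : E) : ℝ := h i - inner ℝ (u i) x

/-- The open polytope cut out by the half-spaces `⟪u i, x⟫ < h i`, with every facet moved inwards
by `t`. -/
def poly (u : Fin k → E) (h : Fin k → ℝ) (t : ℝ) : Set E := {x | ∀ i, t < slack u h i x}

/-- The points whose least slack is attained at `i`, ties being broken in favour of the smallest
index so that the cells partition the space. -/
def cell (u : Fin k → E) (h : Fin k → ℝ) (i : Fin k) : Set E :=
  {x | (∀ j, slack u h i x ≤ slack u h j x) ∧ ∀ j, j < i → slack u h i x < slack u h j x}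

theorem continuous_slack (u : Fin k → E) (h : Fin k → ℝ) (i : Fin k) :
    Continuous (slack u h i) := by unfold slack; fun_prop

theorem slack_combo (u : Fin k → E) (h : Fin k → ℝ) (i : Fin k) {a b : ℝ} (hab : a + b = 1)
    (x y : E) : slack u h i (a • x + b • y) = a * slack u h i x + b * slack u h i y := by
  unfold slack
  rw [inner_add_right, real_inner_smul_right, real_inner_smul_right]
  linear_combination -(h i) * hab

theorem isOpen_poly (u : Fin k → E) (h : Fin k → ℝ) (t : ℝ) : IsOpen (poly u h t) := by
  have : poly u h t = ⋂ i, {x | t < slack u h i x} := by ext; simp [poly]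
  rw [this]
  exact isOpen_iInter_of_finite fun i => isOpen_lt continuous_const (continuous_slack u h i)

theorem convex_poly (u : Fin k → E) (h : Fin k → ℝ) (t : ℝ) : Convex ℝ (poly u h t) := by
  intro x hx y hy a b ha hb hab i
  rw [slack_combo u h i hab]
  have h1 := hx i
  have h2 := hy i
  rcases ha.eq_or_lt with rfl | ha
  · obtain rfl : b = 1 := by linarith
    simpa using h2
  · have e : t = a * t + b * t := by rw [← add_mul, hab, one_mul]
    linarith [mul_lt_mul_of_pos_left h1 ha, mul_le_mul_of_nonneg_left h2.le hb]

theorem poly_anti (u : Fin k → E) (h : Fin k → ℝ) {s t : ℝ} (hst : s ≤ t) :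
    poly u h t ⊆ poly u h s := fun _ hx i => hst.trans_lt (hx i)

theorem exists_mem_cell [NeZero k] (u : Fin k → E) (h : Fin k → ℝ) (x : E) :
    ∃ i, x ∈ cell u h i := by
  obtain ⟨i, hi⟩ := Finite.exists_min fun i => toLex (slack u h i x, i)
  refine ⟨i, fun j => ?_, fun j hj => ?_⟩
  · rcases Prod.Lex.toLex_le_toLex.1 (hi j) with h1 | h1
    · exact h1.le
    · exact h1.1.le
  · rcases Prod.Lex.toLex_le_toLex.1 (hi j) with h1 | h1
    · exact h1
    · exact absurd h1.2 (not_le.2 hj)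

theorem pairwise_disjoint_cell (u : Fin k → E) (h : Fin k → ℝ) :
    Pairwise (Function.onFun Disjoint (cell u h)) := by
  intro i j hij
  refine disjoint_left.2 fun x hi hj => ?_
  rcases lt_or_gt_of_ne hij with hlt | hlt
  · exact absurd (hj.2 i hlt) (not_lt.2 (hi.1 j))
  · exact absurd (hi.2 j hlt) (not_lt.2 (hj.1 i))

theorem measurableSet_cell [MeasurableSpace E] [BorelSpace E] (u : Fin k → E) (h : Fin k → ℝ)
    (i : Fin k) : MeasurableSet (cell u h i) := by
  have : cell u h i = (⋂ j, {x | slack u h i x ≤ slack u h j x}) ∩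
      ⋂ j, ⋂ (_ : j < i), {x | slack u h i x < slack u h j x} := by ext; simp [cell]
  rw [this]
  refine MeasurableSet.inter (MeasurableSet.iInter fun j => ?_)
    (MeasurableSet.iInter fun j => MeasurableSet.iInter fun _ => ?_)
  · exact (isClosed_le (continuous_slack u h i) (continuous_slack u h j)).measurableSet
  · exact (isOpen_lt (continuous_slack u h i) (continuous_slack u h j)).measurableSet

/-- The `i`-th facet of the shrunken polytope is the part of the `i`-th cell at slack `t`. -/
theorem frontier_poly [NeZero k] (u : Fin k → E) (h : Fin k → ℝ) {t : ℝ}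
    (hne : (poly u h t).Nonempty) :
    frontier (poly u h t) = ⋃ i, cell u h i ∩ {x | slack u h i x = t} := by
  rw [(isOpen_poly u h t).frontier_eq]
  ext x
  simp only [Set.mem_sdiff, mem_iUnion, mem_inter_iff, mem_ofPred_eq]
  constructor
  · rintro ⟨hx, hx'⟩
    obtain ⟨i, hi⟩ := exists_mem_cell u h x
    have h1 : t ≤ slack u h i x := by
      have hc : IsClosed {x | t ≤ slack u h i x} :=
        isClosed_le continuous_const (continuous_slack u h i)
      exact closure_minimal (fun y hy => (hy i).le) hc hx
    refine ⟨i, hi, le_antisymm ?_ h1⟩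
    by_contra! hlt
    exact hx' fun j => hlt.trans_le (hi.1 j)
  · rintro ⟨i, hi, hit⟩
    refine ⟨?_, fun hx => (hx i).ne' hit⟩
    obtain ⟨y, hy⟩ := hne
    have hsub : openSegment ℝ x y ⊆ poly u h t := by
      rintro _ ⟨a, b, ha, hb, hab, rfl⟩ j
      rw [slack_combo u h j hab]
      have h1 : t ≤ slack u h j x := hit ▸ hi.1 j
      have h2 := hy j
      have e : t = a * t + b * t := by rw [← add_mul, hab, one_mul]
      linarith [mul_le_mul_of_nonneg_left h1 ha.le, mul_lt_mul_of_pos_left h2 hb]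
    exact closure_mono hsub (segment_subset_closure_openSegment (left_mem_segment ℝ x y))

theorem poly_diff [NeZero k] (u : Fin k → E) (h : Fin k → ℝ) (a b : ℝ) :
    poly u h a \ poly u h b = ⋃ i, cell u h i ∩ {x | slack u h i x ∈ Ioc a b} := by
  ext x
  simp only [Set.mem_sdiff, mem_iUnion, mem_inter_iff, mem_ofPred_eq, mem_Ioc]
  constructor
  · rintro ⟨hx, hx'⟩
    obtain ⟨i, hi⟩ := exists_mem_cell u h x
    refine ⟨i, hi, hx i, ?_⟩
    by_contra! hlt
    exact hx' fun j => hlt.trans_le (hi.1 j)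
  · rintro ⟨i, hi, h1, h2⟩
    exact ⟨fun j => h1.trans_le (hi.1 j), fun hx => (hx i).not_ge h2⟩

end polytope

theorem poly_hausdorff_frontier {m k : ℕ} [NeZero k] (u : Fin k → EuclideanSpace ℝ (Fin (m + 1)))
    (h : Fin k → ℝ) {t : ℝ} (hne : (poly u h t).Nonempty) :
    μH[(m : ℝ)] (frontier (poly u h t)) =
      ∑ i, μH[(m : ℝ)] (cell u h i ∩ {x | slack u h i x = t}) := by
  rw [frontier_poly u h hne, measure_iUnion, tsum_fintype]
  · intro i j hij
    exact (pairwise_disjoint_cell u h hij).mono inter_subset_left inter_subset_left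
  · intro i
    exact (measurableSet_cell u h i).inter
      (isClosed_eq (continuous_slack u h i) continuous_const).measurableSet

/-- Coarea formula for the inner parallel bodies of a polytope, exact up to the universal constant
`c`: on each cell the least slack is an affine function with unit gradient, so the slicing formula
applies. -/
theorem poly_coarea (m : ℕ) : ∃ c : ENNReal, c ≠ 0 ∧ c ≠ ⊤ ∧
    ∀ (k : ℕ) [NeZero k] (u : Fin k → EuclideanSpace ℝ (Fin (m + 1))) (h : Fin k → ℝ),
    (∀ i, ‖u i‖ = 1) → ∀ a b : ℝ, (poly u h b).Nonempty →
      c * volume (poly u h a \ poly u h b) =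
        ∫⁻ t in Ioc a b, μH[(m : ℝ)] (frontier (poly u h t)) := by
  obtain ⟨c, hc0, hct, hc⟩ := exists_hausdorff_slicing m
  refine ⟨c, hc0, hct, fun k _ u h hu a b hne => ?_⟩
  have hms : ∀ i, MeasurableSet (cell u h i ∩ {x | slack u h i x ∈ Ioc a b}) := fun i =>
    (measurableSet_cell u h i).inter ((continuous_slack u h i).measurable measurableSet_Ioc)
  have hset : ∀ i (t : ℝ), (cell u h i ∩ {x | slack u h i x ∈ Ioc a b}) ∩
      {x | inner ℝ (u i) x = h i - t} = {x | t ∈ Ioc a b} ∩ (cell u h i ∩ {x | slack u h i x = t}) := by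
    intro i t
    ext x
    have : inner ℝ (u i) x = h i - t ↔ slack u h i x = t := by
      unfold slack; constructor <;> intro h <;> linarith
    simp only [mem_inter_iff, mem_ofPred_eq, this]
    constructor
    · rintro ⟨⟨h1, h2⟩, h3⟩; exact ⟨h3 ▸ h2, h1, h3⟩
    · rintro ⟨h2, h1, h3⟩; exact ⟨⟨h1, h3 ▸ h2⟩, h3⟩
  rw [poly_diff, measure_iUnion _ hms, tsum_fintype, Finset.mul_sum]
  swap
  · intro i j hij
    exact (pairwise_disjoint_cell u h hij).mono inter_subset_left inter_subset_left
  have e1 : ∀ i, c * volume (cell u h i ∩ {x | slack u h i x ∈ Ioc a b}) =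
      ∫⁻ t : ℝ, μH[(m : ℝ)] ({x | t ∈ Ioc a b} ∩ (cell u h i ∩ {x | slack u h i x = t})) := by
    intro i
    -- slack `t` is height `h i - t` in the direction `u i`
    rw [(hc (u i) (hu i) _ (hms i)).2, ← lintegral_sub_left_eq_self _ (h i)]
    simp only [hset]
  simp only [e1]
  rw [← lintegral_finsetSum]
  · rw [← lintegral_indicator measurableSet_Ioc]
    refine lintegral_congr fun t => ?_
    by_cases ht : t ∈ Ioc a b
    · rw [indicator_of_mem ht, poly_hausdorff_frontier u h (hne.mono (poly_anti u h ht.2))]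
      simp [ht.1, ht.2]
    · rw [indicator_of_notMem ht]
      simp only [ht, ofPred_false, empty_inter, measure_empty, Finset.sum_const_zero]
  · intro i _
    have := (hc (u i) (hu i) _ (hms i)).1.comp (measurable_id.const_sub (h i))
    simpa only [Function.comp_def, id, hset] using this

/-- Since the perimeter decreases along the family, the coarea integral lies between the values at
the two ends. -/
theorem poly_bounds (m : ℕ) : ∃ c : ENNReal, c ≠ 0 ∧ c ≠ ⊤ ∧
    ∀ (k : ℕ) [NeZero k] (u : Fin k → EuclideanSpace ℝ (Fin (m + 1))) (h : Fin k → ℝ),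
    (∀ i, ‖u i‖ = 1) → ∀ a b : ℝ, (poly u h b).Nonempty → Bornology.IsBounded (poly u h a) →
      μH[(m : ℝ)] (frontier (poly u h b)) * ENNReal.ofReal (b - a) ≤
        c * volume (poly u h a \ poly u h b) ∧
      c * volume (poly u h a \ poly u h b) ≤
        μH[(m : ℝ)] (frontier (poly u h a)) * ENNReal.ofReal (b - a) := by
  obtain ⟨c, hc0, hct, hc⟩ := poly_coarea m
  refine ⟨c, hc0, hct, fun k _ u h hu a b hne hbd => ?_⟩
  rw [hc k u h hu a b hne, ← Real.volume_Ioc, ← setLIntegral_const, ← setLIntegral_const]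
  have mono : ∀ s t : ℝ, a ≤ s → s ≤ t → t ≤ b →
      μH[(m : ℝ)] (frontier (poly u h t)) ≤ μH[(m : ℝ)] (frontier (poly u h s)) := by
    intro s t hs hst ht
    exact hausdorffMeasure_frontier_mono (by positivity) (isOpen_poly u h t) (convex_poly u h t)
      (hne.mono (poly_anti u h ht)) (isOpen_poly u h s) (hbd.subset (poly_anti u h hs))
      (poly_anti u h hst)
  constructor
  · exact setLIntegral_mono' measurableSet_Ioc fun t ht => mono t b ht.1.le ht.2 le_rfl
  · exact setLIntegral_mono' measurableSet_Ioc fun t ht => mono a t le_rfl ht.1.le ht.2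

theorem poly_frontier_lt_top {m k : ℕ} [NeZero k] (u : Fin k → EuclideanSpace ℝ (Fin (m + 1)))
    (h : Fin k → ℝ) (hu : ∀ i, ‖u i‖ = 1) (t : ℝ) (hne : (poly u h t).Nonempty)
    (hbd : Bornology.IsBounded (poly u h t)) : μH[(m : ℝ)] (frontier (poly u h t)) < ⊤ := by
  have hb : Bornology.IsBounded (frontier (poly u h t)) :=
    hbd.closure.subset frontier_subset_closure
  rw [poly_hausdorff_frontier u h hne]
  refine ENNReal.sum_lt_top.2 fun i _ => hausdorffMeasure_slice_lt_top (u i) (hu i) (h i - t)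
    (hb.subset ?_) ?_
  · rw [frontier_poly u h hne]
    exact subset_iUnion (fun i => cell u h i ∩ {x | slack u h i x = t}) i
  · rintro x ⟨-, hx⟩
    simp only [slack, mem_ofPred_eq] at hx ⊢
    linarith

/-! ### Inner parallel sets as erosions -/

/-- The inner parallel set in the form of an erosion: the centres of the closed balls of radius `r`
contained in `Ω`. For `0 ≤ r` and `Ω` open, bounded and nonempty it is `innerParallel Ω r`, and its
algebra in `r` is easier. -/
def par {E : Type*} [PseudoMetricSpace E] (Ω : Set E) (r : ℝ) : Set E := {x | closedBall x r ⊆ Ω}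

theorem par_subset {E : Type*} [PseudoMetricSpace E] {Ω : Set E} {r : ℝ} (hr : 0 ≤ r) : par Ω r ⊆ Ω :=
  fun _ hx => hx (mem_closedBall_self hr)

theorem par_mono {E : Type*} [PseudoMetricSpace E] {A B : Set E} (h : A ⊆ B) (r : ℝ) : par A r ⊆ par B r := fun _ hx => hx.trans h

theorem par_anti {E : Type*} [PseudoMetricSpace E] (Ω : Set E) {r s : ℝ} (h : r ≤ s) : par Ω s ⊆ par Ω r :=
  fun _ hx => (closedBall_subset_closedBall h).trans hx

theorem par_add_subset {E : Type*} [PseudoMetricSpace E] (Ω : Set E) (r s : ℝ) : par Ω (r + s) ⊆ par (par Ω s) r := by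
  intro x hx y hy z hz
  refine hx ?_
  rw [mem_closedBall] at *
  linarith [dist_triangle z y x]

theorem isOpen_par {E : Type*} [NormedAddCommGroup E] [ProperSpace E] {Ω : Set E} (hΩ : IsOpen Ω) (r : ℝ) : IsOpen (par Ω r) := by
  rw [Metric.isOpen_iff]
  intro x hx
  obtain ⟨δ, hδ, hsub⟩ := (isCompact_closedBall x r).exists_thickening_subset_open hΩ hx
  refine ⟨δ, hδ, fun y hy z hz => hsub ?_⟩
  rw [mem_thickening_iff]
  refine ⟨z - (y - x), ?_, ?_⟩
  · rw [mem_closedBall, dist_eq_norm] at hz ⊢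
    convert hz using 2; abel
  · rw [mem_ball, dist_eq_norm] at hy
    rw [dist_eq_norm]
    convert hy using 2; abel

section par

variable {E : Type*} [NormedAddCommGroup E] [InnerProductSpace ℝ E]

/-- Erosion is concave in `(x, r)`: the ball about `α x + β y` of radius `α r + β s` is the
combination of the balls about `x` and `y`. -/
theorem par_combo {E : Type*} [NormedAddCommGroup E] [NormedSpace ℝ E] {Ω : Set E} (hΩ : Convex ℝ Ω) {r s α β : ℝ} (hr : 0 ≤ r) (hs : 0 ≤ s)
    (hα : 0 ≤ α) (hβ : 0 ≤ β) (hαβ : α + β = 1) {x y : E} (hx : x ∈ par Ω r) (hy : y ∈ par Ω s) :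
    α • x + β • y ∈ par Ω (α * r + β * s) := by
  intro z hz
  rw [mem_closedBall, dist_eq_norm] at hz
  set ρ := α * r + β * s with hρ
  have hρ0 : 0 ≤ ρ := by positivity
  have key : ∃ v : E, ‖v‖ ≤ 1 ∧ z - (α • x + β • y) = ρ • v := by
    rcases hρ0.eq_or_lt with h | h
    · rw [← h] at hz ⊢
      exact ⟨0, by simp, by simpa using norm_le_zero_iff.1 hz⟩
    · refine ⟨ρ⁻¹ • (z - (α • x + β • y)), ?_, by rw [smul_inv_smul₀ h.ne']⟩
      rw [norm_smul, norm_inv, Real.norm_of_nonneg h.le, inv_mul_le_iff₀ h]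
      linarith
  obtain ⟨v, hv, hzv⟩ := key
  have e : z = α • (x + r • v) + β • (y + s • v) := by
    rw [sub_eq_iff_eq_add] at hzv
    rw [hzv, hρ]
    module
  have hb : ∀ (w : E) (t : ℝ), 0 ≤ t → w + t • v ∈ closedBall w t := by
    intro w t ht
    rw [mem_closedBall, dist_eq_norm, add_sub_cancel_left, norm_smul, Real.norm_of_nonneg ht]
    exact mul_le_of_le_one_right ht hv
  rw [e]
  exact hΩ (hx (hb x r hr)) (hy (hb y s hs)) hα hβ hαβ

theorem convex_par {E : Type*} [NormedAddCommGroup E] [NormedSpace ℝ E] {Ω : Set E} (hΩ : Convex ℝ Ω) {r : ℝ} (hr : 0 ≤ r) : Convex ℝ (par Ω r) := by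
  intro x hx y hy α β hα hβ hαβ
  have := par_combo hΩ hr hr hα hβ hαβ hx hy
  rwa [← add_mul, hαβ, one_mul] at this

/-- Eroding a polytope with unit normals moves each facet by `r`. -/
theorem par_poly {k : ℕ} {u : Fin k → E} (hu : ∀ i, ‖u i‖ = 1) (h : Fin k → ℝ) {r : ℝ}
    (hr : 0 ≤ r) : par (poly u h 0) r = poly u h r := by
  ext x
  constructor
  · intro hx i
    have h1 : x + r • u i ∈ closedBall x r := by
      rw [mem_closedBall, dist_eq_norm, add_sub_cancel_left, norm_smul, hu, mul_one,
        Real.norm_of_nonneg hr]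
    have h2 := hx h1 i
    unfold slack at h2 ⊢
    rw [inner_add_right, real_inner_smul_right, real_inner_self_eq_norm_sq, hu] at h2
    linarith
  · intro hx y hy i
    have h1 := hx i
    unfold slack at h1 ⊢
    have h2 : inner ℝ (u i) (y - x) ≤ r := by
      refine (real_inner_le_norm _ _).trans ?_
      rw [hu, one_mul, ← dist_eq_norm]
      exact hy
    rw [inner_sub_right] at h2
    linarith

/-- A polytope fits between `Ω` and its inner parallel set at distance `ε`: by compactness of `∂Ω`,
finitely many supporting half-spaces of `Ω`, each moved inwards by `ε`, already exclude `∂Ω`. -/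
theorem exists_poly_between [FiniteDimensional ℝ E] [Nontrivial E] {Ω : Set E} (hΩo : IsOpen Ω)
    (hΩb : Bornology.IsBounded Ω) (hΩc : Convex ℝ Ω) {ε : ℝ} (hε : 0 < ε)
    (hne : (par Ω ε).Nonempty) :
    ∃ k, NeZero k ∧ ∃ (u : Fin k → E) (h : Fin k → ℝ), (∀ i, ‖u i‖ = 1) ∧
      par Ω ε ⊆ poly u h 0 ∧ poly u h 0 ⊆ Ω := by
  have : ProperSpace E := FiniteDimensional.proper ℝ E
  have hΩn : Ω.Nonempty := hne.mono (par_subset hε.le)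
  have ex : ∀ y : E, ∃ u : E, ‖u‖ = 1 ∧ (y ∈ frontier Ω → ∀ x ∈ par Ω ε,
      inner ℝ u x < inner ℝ u y - ε) := by
    intro y
    by_cases hy : y ∈ frontier Ω
    · rw [hΩo.frontier_eq] at hy
      obtain ⟨u, hu, hlt⟩ := exists_unit_inner_lt hΩo hΩc hΩn hy.2
      refine ⟨u, hu, fun _ x hx => ?_⟩
      have h1 : x + ε • u ∈ closedBall x ε := by
        rw [mem_closedBall, dist_eq_norm, add_sub_cancel_left, norm_smul, hu, mul_one,
          Real.norm_of_nonneg hε.le]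
      have h2 := hlt _ (hx h1)
      rw [inner_add_right, real_inner_smul_right, real_inner_self_eq_norm_sq, hu] at h2
      linarith
    · obtain ⟨u, hu⟩ := exists_norm_eq E (zero_le_one' ℝ)
      exact ⟨u, hu, fun h => absurd h hy⟩
  choose U hU1 hU2 using ex
  have hcomp : IsCompact (frontier Ω) :=
    isCompact_of_isClosed_isBounded isClosed_frontier (hΩb.closure.subset frontier_subset_closure)
  obtain ⟨t, ht1, ht2⟩ := hcomp.elim_nhds_subcover
    (fun y => {x | inner ℝ (U y) y - ε < inner ℝ (U y) x}) (fun y _ => by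
      refine (isOpen_lt continuous_const (by fun_prop)).mem_nhds ?_
      simp only [mem_ofPred_eq]; linarith)
  set e := t.equivFin
  set u : Fin t.card → E := fun i => U (e.symm i) with hu
  set h : Fin t.card → ℝ := fun i => inner ℝ (U (e.symm i)) (e.symm i : E) - ε with hh
  have hsub1 : par Ω ε ⊆ poly u h 0 := by
    intro x hx i
    have := hU2 (e.symm i) (ht1 _ (e.symm i).2) x hx
    unfold slack
    simp only [hu, hh]
    linarith
  have hsub2 : poly u h 0 ⊆ Ω := by
    refine isPreconnected_subset_of_disjoint_frontier (convex_poly u h 0).isPreconnected hΩo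
      (hne.mono fun x hx => ⟨hsub1 hx, par_subset hε.le hx⟩) fun x hx hxf => ?_
    obtain ⟨y, hy, hxy⟩ := mem_iUnion₂.1 (ht2 hxf)
    have h1 := hx (e ⟨y, hy⟩)
    unfold slack at h1
    simp only [hu, hh, Equiv.symm_apply_apply] at h1
    simp only [mem_ofPred_eq] at hxy
    linarith
  refine ⟨t.card, ⟨fun h0 => ?_⟩, u, h, fun i => hU1 _, hsub1, hsub2⟩
  -- without any half-space the polytope would be the whole space
  have huniv : Ω = univ := by
    refine eq_univ_of_univ_subset fun x _ => hsub2 fun i => ?_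
    exact absurd i.2 (by omega)
  rw [huniv] at hΩb
  exact NormedSpace.unbounded_univ ℝ E hΩb

end par

section euclidean

open scoped Pointwise

/-- The volume as a real number. -/
def vol {m : ℕ} (A : Set (EuclideanSpace ℝ (Fin (m + 1)))) : ℝ := (volume A).toReal

/-- The perimeter in dimension `m + 1`, as a real number, with the exponent `m` in place of
`(m + 1 : ℕ) - 1` used by `perim`. -/
def surf {m : ℕ} (A : Set (EuclideanSpace ℝ (Fin (m + 1)))) : ℝ := (μH[(m : ℝ)] (frontier A)).toReal

theorem surf_lt_top {m : ℕ} {Ω : Set (EuclideanSpace ℝ (Fin (m + 1)))} (hΩo : IsOpen Ω)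
    (hΩb : Bornology.IsBounded Ω) (hΩc : Convex ℝ Ω) {r : ℝ} (hr : 0 < r)
    (hne : (par Ω r).Nonempty) : μH[(m : ℝ)] (frontier (par Ω r)) < ⊤ := by
  obtain ⟨k, hk, u, h, hu, h1, h2⟩ := exists_poly_between hΩo hΩb hΩc hr hne
  exact (hausdorffMeasure_frontier_mono (by positivity) (isOpen_par hΩo r) (convex_par hΩc hr.le)
    hne (isOpen_poly u h 0) (hΩb.subset h2) h1).trans_lt
    (poly_frontier_lt_top u h hu 0 (hne.mono h1) (hΩb.subset h2))

/-- The polytope bounds transferred to `Ω`. The polytope lies between `par Ω ε` and `Ω`,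
whence the shifts by `ε`. -/
theorem par_bounds (m : ℕ) : ∃ c : ℝ, 0 < c ∧ ∀ Ω : Set (EuclideanSpace ℝ (Fin (m + 1))), IsOpen Ω → Bornology.IsBounded Ω →
    Convex ℝ Ω → ∀ a b ε : ℝ, 0 < a → a < b → 0 < ε → (par Ω (b + ε)).Nonempty →
    surf (par Ω (b + ε)) * (b - a) ≤ c * (vol (par Ω a) - vol (par Ω (b + ε))) ∧
    c * (vol (par Ω (a + ε)) - vol (par Ω b)) ≤ surf (par Ω a) * (b - a) := by
  obtain ⟨c, hc0, hct, hc⟩ := poly_bounds m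
  refine ⟨c.toReal, ENNReal.toReal_pos hc0 hct, fun Ω hΩo hΩb hΩc a b ε ha hab hε hne => ?_⟩
  have hb := ha.trans hab
  obtain ⟨k, hk, u, h, hu, h1, h2⟩ := exists_poly_between hΩo hΩb hΩc hε
    (hne.mono (par_anti Ω (by linarith)))
  have in1 : ∀ r, 0 ≤ r → par Ω (r + ε) ⊆ poly u h r := fun r hr =>
    (par_add_subset Ω r ε).trans ((par_mono h1 r).trans (par_poly hu h hr).le)
  have in2 : ∀ r, 0 ≤ r → poly u h r ⊆ par Ω r := fun r hr =>
    (par_poly hu h hr).ge.trans (par_mono h2 r)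
  have bpar : ∀ r, 0 ≤ r → Bornology.IsBounded (par Ω r) := fun r hr => hΩb.subset (par_subset hr)
  have bpol : ∀ r, 0 ≤ r → Bornology.IsBounded (poly u h r) := fun r hr =>
    (bpar r hr).subset (in2 r hr)
  have npol : (poly u h b).Nonempty := hne.mono (in1 b hb.le)
  have npola : (poly u h a).Nonempty := npol.mono (poly_anti u h hab.le)
  have npar : (par Ω a).Nonempty := npola.mono (in2 a ha.le)
  obtain ⟨B1, B2⟩ := hc k u h hu a b npol (bpol a ha.le)
  have vmono : ∀ {A B : Set (EuclideanSpace ℝ (Fin (m + 1)))}, A ⊆ B → Bornology.IsBounded B → vol A ≤ vol B := fun hAB hB =>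
    ENNReal.toReal_mono hB.measure_lt_top.ne (measure_mono hAB)
  -- rewrite the volume of the layer as a difference of real volumes
  have hvol : (c * volume (poly u h a \ poly u h b)).toReal =
      c.toReal * (vol (poly u h a) - vol (poly u h b)) := by
    rw [ENNReal.toReal_mul, measure_sdiff (poly_anti u h hab.le)
      (isOpen_poly u h b).measurableSet.nullMeasurableSet (bpol b hb.le).measure_lt_top.ne,
      ENNReal.toReal_sub_of_le (measure_mono (poly_anti u h hab.le))
        (bpol a ha.le).measure_lt_top.ne]
    rfl
  have hfin : c * volume (poly u h a \ poly u h b) ≠ ⊤ :=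
    ENNReal.mul_ne_top hct ((bpol a ha.le).subset sdiff_subset).measure_lt_top.ne
  have hfs : ∀ r, 0 ≤ r → r ≤ b → μH[(m : ℝ)] (frontier (poly u h r)) ≠ ⊤ := fun r hr hrb =>
    (poly_frontier_lt_top u h hu r (npol.mono (poly_anti u h hrb)) (bpol r hr)).ne
  constructor
  · have s1 : surf (par Ω (b + ε)) ≤ surf (poly u h b) :=
      ENNReal.toReal_mono (hfs b hb.le le_rfl) (hausdorffMeasure_frontier_mono (by positivity)
        (isOpen_par hΩo _) (convex_par hΩc (by linarith)) hne (isOpen_poly u h b) (bpol b hb.le)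
        (in1 b hb.le))
    have s2 := ENNReal.toReal_mono hfin B1
    rw [hvol, ENNReal.toReal_mul, ENNReal.toReal_ofReal (by linarith)] at s2
    have v1 := vmono (in2 a ha.le) (bpar a ha.le)
    have v2 := vmono (in1 b hb.le) (bpol b hb.le)
    calc surf (par Ω (b + ε)) * (b - a) ≤ surf (poly u h b) * (b - a) :=
          mul_le_mul_of_nonneg_right s1 (by linarith)
      _ ≤ _ := s2
      _ ≤ _ := mul_le_mul_of_nonneg_left (by linarith) ENNReal.toReal_nonneg
  · have s1 : surf (poly u h a) ≤ surf (par Ω a) :=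
      ENNReal.toReal_mono (surf_lt_top hΩo hΩb hΩc ha npar).ne
        (hausdorffMeasure_frontier_mono (by positivity)
        (isOpen_poly u h a) (convex_poly u h a) npola (isOpen_par hΩo _) (bpar a ha.le)
        (in2 a ha.le))
    have s2 := ENNReal.toReal_mono (ENNReal.mul_ne_top (hfs a ha.le hab.le) ENNReal.ofReal_ne_top) B2
    rw [hvol, ENNReal.toReal_mul, ENNReal.toReal_ofReal (by linarith)] at s2
    have v1 := vmono (in1 a ha.le) (bpol a ha.le)
    have v2 := vmono (in2 b hb.le) (bpar b hb.le)
    calc _ ≤ _ := mul_le_mul_of_nonneg_left (by linarith) ENNReal.toReal_nonneg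
      _ ≤ _ := s2
      _ ≤ _ := mul_le_mul_of_nonneg_right s1 (by linarith)

/-- The homothety with centre in `par Ω s` and ratio `t = (s - b) / (s - a)` maps `par Ω a` into
`par Ω b`, which bounds the decrease of volume and perimeter from `a` to `b`. -/
theorem par_scaling {m : ℕ} {Ω : Set (EuclideanSpace ℝ (Fin (m + 1)))} (hΩo : IsOpen Ω)
    (hΩb : Bornology.IsBounded Ω) (hΩc : Convex ℝ Ω) {a b s : ℝ} (ha : 0 < a) (hab : a < b)
    (hbs : b < s) (hne : (par Ω s).Nonempty) :
    ((s - b) / (s - a)) ^ (m + 1) * vol (par Ω a) ≤ vol (par Ω b) ∧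
    ((s - b) / (s - a)) ^ m * surf (par Ω a) ≤ surf (par Ω b) := by
  obtain ⟨y, hy⟩ := hne
  set t := (s - b) / (s - a) with ht
  have hsa : 0 < s - a := by linarith
  have ht0 : 0 < t := div_pos (by linarith) hsa
  have ht1 : t ≤ 1 := by rw [ht, div_le_one hsa]; linarith
  have hts : t * a + (1 - t) * s = b := by rw [ht]; field_simp; ring
  set w := (1 - t) • y with hw
  let φ : EuclideanSpace ℝ (Fin (m + 1)) ≃ₜ EuclideanSpace ℝ (Fin (m + 1)) := (Homeomorph.smulOfNeZero t ht0.ne').trans (Homeomorph.addLeft w)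
  have hφ : ∀ S : Set (EuclideanSpace ℝ (Fin (m + 1))), φ '' S = (fun x => w + x) '' (t • S) := by
    intro S
    rw [← image_smul, image_image]
    rfl
  have hsub : φ '' par Ω a ⊆ par Ω b := by
    rintro _ ⟨x, hx, rfl⟩
    have := par_combo hΩc ha.le (by linarith : 0 ≤ s) ht0.le (sub_nonneg.2 ht1) (by ring) hx hy
    rw [hts] at this
    have e : φ x = t • x + (1 - t) • y := add_comm _ _
    rwa [e]
  have hbb : Bornology.IsBounded (par Ω b) := hΩb.subset (par_subset (by linarith))
  constructor
  · have h1 : volume (φ '' par Ω a) = ENNReal.ofReal (t ^ (m + 1)) * volume (par Ω a) := by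
      rw [hφ, image_add_left, measure_preimage_add, Measure.addHaar_smul]
      simp [abs_of_pos ht0]
    have h2 := ENNReal.toReal_mono (hbb.measure_lt_top (μ := volume)).ne (measure_mono hsub)
    rwa [h1, ENNReal.toReal_mul, ENNReal.toReal_ofReal (by positivity)] at h2
  · have hne : (par Ω b).Nonempty := ⟨y, par_anti Ω hbs.le hy⟩
    have hnea : (par Ω a).Nonempty := ⟨y, par_anti Ω (hab.trans hbs).le hy⟩
    have h1 : μH[(m : ℝ)] (frontier (φ '' par Ω a)) =
        ENNReal.ofReal (t ^ m) * μH[(m : ℝ)] (frontier (par Ω a)) := by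
      rw [← φ.image_frontier, hφ, (isometry_add_left w).hausdorffMeasure_image
        (Or.inl (by positivity)), Measure.hausdorffMeasure_smul₀ (by positivity) ht0.ne']
      rw [NNReal.rpow_natCast, ENNReal.smul_def, smul_eq_mul, ENNReal.ofReal_pow ht0.le]
      congr 1
      rw [ENNReal.coe_pow, ← enorm_eq_nnnorm, Real.enorm_of_nonneg ht0.le]
    have hconv : Convex ℝ (φ '' par Ω a) := by
      rw [hφ]
      exact ((convex_par hΩc ha.le).smul t).translate w
    have h2 := ENNReal.toReal_mono (surf_lt_top hΩo hΩb hΩc (ha.trans hab) hne).ne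
      (hausdorffMeasure_frontier_mono (d := (m : ℝ)) (by positivity)
      (φ.isOpenMap _ (isOpen_par hΩo a)) hconv (hnea.image _) (isOpen_par hΩo b) hbb hsub)
    rwa [h1, ENNReal.toReal_mul, ENNReal.toReal_ofReal (by positivity)] at h2

end euclidean

/-! ### The one-variable argument -/

/-- The scaling bound excludes the downward jumps that monotonicity alone allows. -/
theorem continuousAt_of_antitone_of_scaling {f : ℝ → ℝ} {R : ℝ} {k : ℕ}
    (hanti : AntitoneOn f (Ioo 0 R))
    (hs : ∀ a b s, 0 < a → a < b → b < s → s < R → ((s - b) / (s - a)) ^ k * f a ≤ f b)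
    {r : ℝ} (hr : r ∈ Ioo 0 R) : ContinuousAt f r := by
  -- any `s` strictly between `r` and `R` serves as the anchor of the scaling bound
  set s := (r + R) / 2 with hsd
  have hrs : r < s := by rw [hsd]; linarith [hr.2]
  have hsR : s < R := by rw [hsd]; linarith [hr.2]
  set g : ℝ → ℝ := fun x => ((s - x) / (s - r)) ^ k * f r with hg
  have hgc : Tendsto g (nhds r) (nhds (f r)) := by
    have h1 : ContinuousAt g r := by rw [hg]; fun_prop
    have h2 : g r = f r := by simp [hg, div_self (sub_ne_zero.2 hrs.ne')]
    have := h1.tendsto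
    rwa [h2] at this
  have h1 : Tendsto (fun x => min (g x) (f r)) (nhds r) (nhds (f r)) := by
    simpa using hgc.min (tendsto_const_nhds (x := f r))
  have h2 : Tendsto (fun x => max (g x) (f r)) (nhds r) (nhds (f r)) := by
    simpa using hgc.max (tendsto_const_nhds (x := f r))
  have hev : ∀ᶠ x in nhds r, x ∈ Ioo 0 s := Ioo_mem_nhds hr.1 hrs
  refine tendsto_of_tendsto_of_tendsto_of_le_of_le' h1 h2 ?_ ?_
  · filter_upwards [hev] with x hx
    have hxR : x ∈ Ioo 0 R := ⟨hx.1, hx.2.trans hsR⟩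
    rcases le_or_gt x r with h | h
    · exact (min_le_right _ _).trans (hanti hxR hr h)
    · exact (min_le_left _ _).trans (hs r x s hr.1 h hx.2 hsR)
  · filter_upwards [hev] with x hx
    have hxR : x ∈ Ioo 0 R := ⟨hx.1, hx.2.trans hsR⟩
    rcases lt_or_ge x r with h | h
    · refine le_trans ?_ (le_max_left _ _)
      have h3 := hs x r s hx.1 h hrs hsR
      have p1 : 0 < s - x := by linarith
      have p2 : 0 < s - r := by linarith
      calc f x = ((s - x) / (s - r)) ^ k * (((s - r) / (s - x)) ^ k * f x) := by
            rw [← mul_assoc, ← mul_pow, div_mul_div_cancel₀ p2.ne', div_self p1.ne', one_pow,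
              one_mul]
        _ ≤ g x := mul_le_mul_of_nonneg_left h3 (by positivity)
    · exact (hanti hr hxR h).trans (le_max_right _ _)

/-- The one-variable part of the argument, for a volume function `V` and a perimeter function `P`.
The hypotheses force `V' = -P / c`; with log-concavity of `V` this makes `P / V` monotone, and
`V → 0` at `R` makes it blow up there, so that `r * (P r / V r)` takes the value one exactly once. -/
theorem existsUnique_of_parallel_bounds {V P : ℝ → ℝ} {R c : ℝ} {k l : ℕ} (hR : 0 < R) (hc : 0 < c)
    (hV : ∀ r ∈ Ioo 0 R, 0 < V r) (hP : ∀ r ∈ Ioo 0 R, 0 ≤ P r)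
    (hVa : AntitoneOn V (Ioo 0 R)) (hPa : AntitoneOn P (Ioo 0 R))
    (hVs : ∀ a b s, 0 < a → a < b → b < s → s < R → ((s - b) / (s - a)) ^ k * V a ≤ V b)
    (hPs : ∀ a b s, 0 < a → a < b → b < s → s < R → ((s - b) / (s - a)) ^ l * P a ≤ P b)
    (hlo : ∀ a b ε, 0 < a → a < b → 0 < ε → b + ε < R →
      P (b + ε) * (b - a) ≤ c * (V a - V (b + ε)))
    (hhi : ∀ a b ε, 0 < a → a < b → 0 < ε → b + ε < R →
      c * (V (a + ε) - V b) ≤ P a * (b - a))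
    (hlog : ∀ r ∈ Ioo 0 R, ∀ s ∈ Ioo 0 R, ∀ α β : ℝ, 0 < α → 0 < β → α + β = 1 →
      V r ^ α * V s ^ β ≤ V (α * r + β * s))
    (hV0 : ∀ δ > 0, ∃ r ∈ Ioo 0 R, V r < δ) :
    ∃! r : ℝ, r ∈ Ioo 0 R ∧ P r / V r = 1 / r := by
  have Vc : ∀ r ∈ Ioo 0 R, ContinuousAt V r := fun r hr =>
    continuousAt_of_antitone_of_scaling hVa hVs hr
  have Pc : ∀ r ∈ Ioo 0 R, ContinuousAt P r := fun r hr =>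
    continuousAt_of_antitone_of_scaling hPa hPs hr
  have sh : ∀ f : ℝ → ℝ, ∀ r, ContinuousAt f r →
      Tendsto (fun ε => f (r + ε)) (nhdsWithin 0 (Ioi 0)) (nhds (f r)) := by
    intro f r hf
    have h1 : Tendsto (fun ε : ℝ => r + ε) (nhdsWithin 0 (Ioi 0)) (nhds r) := by
      have : Tendsto (fun ε : ℝ => r + ε) (nhds 0) (nhds (r + 0)) := by
        exact (continuous_const.add continuous_id).tendsto 0
      rw [add_zero] at this
      exact this.mono_left nhdsWithin_le_nhds
    exact hf.tendsto.comp h1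
  have hev : ∀ b < R, ∀ᶠ ε : ℝ in nhdsWithin 0 (Ioi 0), 0 < ε ∧ b + ε < R := by
    intro b hb
    filter_upwards [Ioo_mem_nhdsGT (sub_pos.2 hb)] with ε hε
    exact ⟨hε.1, by linarith [hε.2]⟩
  -- continuity removes the shift by `ε` from the two bounds
  have lo : ∀ a b, 0 < a → a < b → b < R → P b * (b - a) ≤ c * (V a - V b) := by
    intro a b ha hab hb
    have hb' : b ∈ Ioo 0 R := ⟨ha.trans hab, hb⟩
    refine le_of_tendsto_of_tendsto ((sh P b (Pc b hb')).mul_const _)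
      ((tendsto_const_nhds.sub (sh V b (Vc b hb'))).const_mul c) ?_
    filter_upwards [hev b hb] with ε hε using hlo a b ε ha hab hε.1 hε.2
  have hi : ∀ a b, 0 < a → a < b → b < R → c * (V a - V b) ≤ P a * (b - a) := by
    intro a b ha hab hb
    have ha' : a ∈ Ioo 0 R := ⟨ha, hab.trans hb⟩
    refine le_of_tendsto (((sh V a (Vc a ha')).sub_const _).const_mul c) ?_
    filter_upwards [hev b hb] with ε hε using hhi a b ε ha hab hε.1 hε.2
  have hder : ∀ r ∈ Ioo 0 R, HasDerivAt V (-(P r / c)) r := by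
    intro r hr
    rw [hasDerivAt_iff_tendsto_slope]
    have hPt : Tendsto (fun x => -(P x / c)) (nhdsWithin r {r}ᶜ) (nhds (-(P r / c))) :=
      (((Pc r hr).tendsto.div_const c).neg).mono_left nhdsWithin_le_nhds
    have h1 : Tendsto (fun x => min (-(P x / c)) (-(P r / c))) (nhdsWithin r {r}ᶜ)
        (nhds (-(P r / c))) := by
      simpa using hPt.min (tendsto_const_nhds (x := -(P r / c)))
    have h2 : Tendsto (fun x => max (-(P x / c)) (-(P r / c))) (nhdsWithin r {r}ᶜ)
        (nhds (-(P r / c))) := by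
      simpa using hPt.max (tendsto_const_nhds (x := -(P r / c)))
    have hev : ∀ᶠ x in nhdsWithin r {r}ᶜ, x ∈ Ioo 0 R ∧ x ≠ r := by
      filter_upwards [nhdsWithin_le_nhds (Ioo_mem_nhds hr.1 hr.2), self_mem_nhdsWithin]
        with x hx hx'
      exact ⟨hx, hx'⟩
    have key : ∀ x ∈ Ioo 0 R, ∀ y ∈ Ioo 0 R, x < y →
        -(P x / c) ≤ slope V x y ∧ slope V x y ≤ -(P y / c) := by
      intro x hx y hy hxy
      have h3 := lo x y hx.1 hxy hy.2
      have h4 := hi x y hx.1 hxy hy.2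
      have hd : 0 < y - x := by linarith
      rw [slope_def_field, ← neg_div, ← neg_div, div_le_div_iff₀ hc hd, div_le_div_iff₀ hd hc]
      constructor <;> linarith
    refine tendsto_of_tendsto_of_tendsto_of_le_of_le' h1 h2 ?_ ?_
    · filter_upwards [hev] with x hx
      rcases lt_or_gt_of_ne hx.2 with h | h
      · rw [slope_comm]; exact (min_le_left _ _).trans (key x hx.1 r hr h).1
      · exact (min_le_right _ _).trans (key r hr x hx.1 h).1
    · filter_upwards [hev] with x hx
      rcases lt_or_gt_of_ne hx.2 with h | h
      · rw [slope_comm]; exact (key x hx.1 r hr h).2.trans (le_max_right _ _)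
      · exact (key r hr x hx.1 h).2.trans (le_max_left _ _)
  have hconc : ConcaveOn ℝ (Ioo 0 R) (fun r => Real.log (V r)) := by
    rw [concaveOn_iff_forall_pos]
    refine ⟨convex_Ioo 0 R, fun x hx y hy α β hα hβ hαβ => ?_⟩
    have h1 := hlog x hx y hy α β hα hβ hαβ
    have px := hV x hx
    have py := hV y hy
    have h2 := Real.log_le_log (by positivity) h1
    rw [Real.log_mul (by positivity) (by positivity), Real.log_rpow px, Real.log_rpow py] at h2
    simpa [smul_eq_mul] using h2
  have hlogder : ∀ r ∈ Ioo 0 R, HasDerivAt (fun r => Real.log (V r)) (-(P r / c) / V r) r :=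
    fun r hr => (hder r hr).log (hV r hr).ne'
  have hψ : ∀ a ∈ Ioo 0 R, ∀ b ∈ Ioo 0 R, a ≤ b → P a / V a ≤ P b / V b := by
    intro a ha b hb hab
    have := hconc.antitoneOn_deriv (fun x hx => (hlogder x hx).differentiableAt) ha hb hab
    rw [(hlogder a ha).deriv, (hlogder b hb).deriv, neg_div, neg_div, neg_le_neg_iff,
      div_right_comm, div_right_comm (P b)] at this
    exact (div_le_div_iff_of_pos_right hc).1 this
  -- let `b → R` in `hi`, using that `V b` becomes arbitrarily small
  have hblow : ∀ a ∈ Ioo 0 R, c * V a ≤ P a * (R - a) := by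
    intro a ha
    refine le_of_forall_pos_le_add fun δ hδ => ?_
    obtain ⟨b, hb, hbδ⟩ := hV0 (δ / c) (by positivity)
    rw [lt_div_iff₀ hc] at hbδ
    have hPa0 := hP a ha
    rcases le_or_gt b a with h | h
    · have h1 := mul_le_mul_of_nonneg_left (hVa hb ha h) hc.le
      have h2 := mul_nonneg hPa0 (sub_nonneg.2 ha.2.le)
      linarith
    · have h1 := hi a b ha.1 h hb.2
      have h2 : P a * (b - a) ≤ P a * (R - a) :=
        mul_le_mul_of_nonneg_left (by linarith [hb.2]) hPa0
      linarith
  have hPpos : ∀ a ∈ Ioo 0 R, 0 < P a := by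
    intro a ha
    have h1 : 0 < P a * (R - a) := lt_of_lt_of_le (mul_pos hc (hV a ha)) (hblow a ha)
    exact pos_of_mul_pos_left h1 (sub_nonneg.2 ha.2.le)
  set f : ℝ → ℝ := fun r => r * (P r / V r) with hf
  have hmono : StrictMonoOn f (Ioo 0 R) := by
    intro a ha b hb hab
    have h1 := hψ a ha b hb hab.le
    have h2 : 0 < P a / V a := div_pos (hPpos a ha) (hV a ha)
    exact mul_lt_mul hab h1 h2 hb.1.le
  have hfc : ContinuousOn f (Ioo 0 R) := fun r hr =>
    (continuousAt_id.mul ((Pc r hr).div (Vc r hr) (hV r hr).ne')).continuousWithinAt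
  have heq : ∀ r ∈ Ioo 0 R, (P r / V r = 1 / r ↔ f r = 1) := by
    intro r hr
    rw [eq_div_iff hr.1.ne', hf, mul_comm]
  have hhalf : R / 2 ∈ Ioo 0 R := ⟨by linarith, by linarith⟩
  set K := P (R / 2) / V (R / 2) with hK
  have hK0 : 0 < K := div_pos (hPpos _ hhalf) (hV _ hhalf)
  -- `P / V ≤ K` on `(0, R / 2]`, so the product is below one at `1 / (2 * K)`
  set r₁ := min (R / 2) (1 / (2 * K)) with hr1
  have hr1pos : 0 < r₁ := lt_min (by linarith) (by positivity)
  have hr1m : r₁ ∈ Ioo 0 R := ⟨hr1pos, (min_le_left _ _).trans_lt hhalf.2⟩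
  have hf1 : f r₁ < 1 := by
    have h1 : f r₁ ≤ r₁ * K :=
      mul_le_mul_of_nonneg_left (hψ r₁ hr1m _ hhalf (min_le_left _ _)) hr1pos.le
    have h2 : r₁ * K ≤ 1 / (2 * K) * K := mul_le_mul_of_nonneg_right (min_le_right _ _) hK0.le
    have h3 : 1 / (2 * K) * K = 1 / 2 := by field_simp
    linarith
  -- the solution of `R - r = c * r`, at which `hblow` reads `c * V r ≤ P r * (c * r)`
  set r₂ := R / (1 + c) with hr2
  have hr2m : r₂ ∈ Ioo 0 R := ⟨by positivity, by rw [hr2, div_lt_iff₀ (by positivity)]; nlinarith⟩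
  have hf2 : 1 ≤ f r₂ := by
    have h1 := hblow r₂ hr2m
    have h2 : R - r₂ = c * r₂ := by rw [hr2]; field_simp; ring
    have h3 := hV r₂ hr2m
    rw [h2] at h1
    have h4 : V r₂ ≤ r₂ * P r₂ := by
      refine le_of_mul_le_mul_left ?_ hc
      linarith
    simp only [hf]
    rw [← mul_div_assoc, le_div_iff₀ h3, one_mul]
    exact h4
  have hr12 : r₁ < r₂ := (hmono.lt_iff_lt hr1m hr2m).1 (hf1.trans_le hf2)
  have hsub : Icc r₁ r₂ ⊆ Ioo 0 R := fun x hx => ⟨hr1m.1.trans_le hx.1, hx.2.trans_lt hr2m.2⟩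
  obtain ⟨r, hr, hfr⟩ := intermediate_value_Icc hr12.le (hfc.mono hsub) ⟨hf1.le, hf2⟩
  refine ⟨r, ⟨hsub hr, (heq r (hsub hr)).2 hfr⟩, ?_⟩
  rintro s ⟨hs, hse⟩
  exact hmono.injOn hs (hsub hr) (((heq s hs).1 hse).trans hfr.symm)

/-! ### Inradius, and existence and uniqueness -/

section final

variable {m : ℕ} {Ω : Set (EuclideanSpace ℝ (Fin (m + 1)))}

theorem frontier_nonempty_of_bounded (hΩb : Bornology.IsBounded Ω) (hΩne : Ω.Nonempty) :
    (frontier Ω).Nonempty := by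
  rw [nonempty_frontier_iff]
  refine ⟨hΩne, ?_⟩
  rintro rfl
  exact NormedSpace.unbounded_univ ℝ _ hΩb

theorem innerParallel_eq (hΩo : IsOpen Ω) (hΩb : Bornology.IsBounded Ω) (hΩne : Ω.Nonempty)
    {r : ℝ} (hr : 0 ≤ r) : innerParallel Ω r = par Ω r := by
  ext x
  constructor
  · rintro ⟨hx, hxr⟩
    refine isPreconnected_subset_of_disjoint_frontier (convex_closedBall x r).isPreconnected hΩo
      ⟨x, mem_closedBall_self hr, hx⟩ fun z hz hzf => ?_
    have h1 := infDist_le_dist_of_mem hzf (x := x)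
    rw [mem_closedBall, dist_comm] at hz
    linarith
  · intro hx
    refine ⟨par_subset hr hx, ?_⟩
    obtain ⟨z, hz, hzd⟩ := isClosed_frontier.exists_infDist_eq_dist
      (frontier_nonempty_of_bounded hΩb hΩne) x
    rw [hzd]
    by_contra! hle
    rw [hΩo.frontier_eq] at hz
    rw [dist_comm] at hle
    exact hz.2 (hx hle)

theorem bddAbove_infDist (hΩb : Bornology.IsBounded Ω) (hΩne : Ω.Nonempty) :
    BddAbove ((fun x => infDist x (frontier Ω)) '' Ω) := by
  obtain ⟨z, hz⟩ := frontier_nonempty_of_bounded hΩb hΩne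
  refine ⟨diam (closure Ω), ?_⟩
  rintro _ ⟨x, hx, rfl⟩
  exact (infDist_le_dist_of_mem hz).trans
    (dist_le_diam_of_mem hΩb.closure (subset_closure hx) (frontier_subset_closure hz))

theorem par_nonempty_iff (hΩo : IsOpen Ω) (hΩb : Bornology.IsBounded Ω) (hΩne : Ω.Nonempty)
    {r : ℝ} (hr : 0 ≤ r) : (par Ω r).Nonempty ↔ r < inradius Ω := by
  rw [← innerParallel_eq hΩo hΩb hΩne hr]
  constructor
  · rintro ⟨x, hx, hxr⟩
    exact hxr.trans_le (le_csSup (bddAbove_infDist hΩb hΩne) ⟨x, hx, rfl⟩)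
  · intro h
    obtain ⟨_, ⟨x, hx, rfl⟩, hxr⟩ := exists_lt_of_lt_csSup (hΩne.image _) h
    exact ⟨x, hx, hxr⟩

theorem inradius_pos (hΩo : IsOpen Ω) (hΩb : Bornology.IsBounded Ω) (hΩne : Ω.Nonempty) :
    0 < inradius Ω := by
  rw [← par_nonempty_iff hΩo hΩb hΩne le_rfl]
  obtain ⟨x, hx⟩ := hΩne
  exact ⟨x, by simpa [par] using hx⟩

/-- The volume of the inner parallel sets shrinks to zero at the inradius: their intersection is
convex and contains no ball, since a ball of radius `δ` inside it would put a ball of radius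
`inradius Ω` at its centre. -/
theorem exists_vol_lt (hΩo : IsOpen Ω) (hΩb : Bornology.IsBounded Ω) (hΩc : Convex ℝ Ω)
    (hΩne : Ω.Nonempty) {δ : ℝ} (hδ : 0 < δ) : ∃ r ∈ Ioo 0 (inradius Ω), vol (par Ω r) < δ := by
  set R := inradius Ω with hR
  have hR0 : 0 < R := inradius_pos hΩo hΩb hΩne
  set ρ : ℕ → ℝ := fun k => R - R / (k + 2) with hρ
  have hρ0 : ∀ k, 0 < ρ k := by
    intro k
    have : R / ((k : ℝ) + 2) < R := div_lt_self hR0 (by have := k.cast_nonneg (α := ℝ); linarith)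
    simp only [hρ]; linarith
  have hρR : ∀ k, ρ k < R := by
    intro k
    have : 0 < R / ((k : ℝ) + 2) := by positivity
    simp only [hρ]; linarith
  have hρm : Monotone ρ := by
    intro i j hij
    have : (i : ℝ) ≤ j := by exact_mod_cast hij
    simp only [hρ]
    gcongr
  have hρt : Tendsto ρ atTop (nhds R) := by
    have h1 : Tendsto (fun k : ℕ => R / ((k : ℝ) + 2)) atTop (nhds 0) :=
      tendsto_const_nhds.div_atTop
        (tendsto_atTop_add_const_right _ _ tendsto_natCast_atTop_atTop)
    simpa using tendsto_const_nhds.sub h1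
  set Z := ⋂ k, par Ω (ρ k) with hZ
  have hZc : Convex ℝ Z := convex_iInter fun k => convex_par hΩc (hρ0 k).le
  have hZi : interior Z = ∅ := by
    by_contra hne
    obtain ⟨x, hx⟩ := nonempty_iff_ne_empty.2 hne
    obtain ⟨η, hη, hball⟩ := Metric.isOpen_iff.1 isOpen_interior x hx
    have hb2 : closedBall x (η / 2) ⊆ Z :=
      (closedBall_subset_ball (by linarith)).trans (hball.trans interior_subset)
    obtain ⟨k, hk⟩ := (hρt.eventually (lt_mem_nhds (show R - η / 2 < R by linarith))).exists
    -- a ball about `x` inside the `ρ k`-erosion adds its radius to `ρ k`, which then exceeds `R`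
    have hx2 : x ∈ par Ω (ρ k + η / 2) := by
      have hxx : x ∈ par (par Ω (ρ k)) (η / 2) := hb2.trans (iInter_subset _ k)
      intro z hz
      rw [mem_closedBall, dist_comm] at hz
      obtain ⟨y, hxy, hyz⟩ := exists_dist_le_le (half_pos hη).le (hρ0 k).le hz
      exact hxx (mem_closedBall'.2 hxy) (mem_closedBall'.2 hyz)
    have := (par_nonempty_iff hΩo hΩb hΩne (by have := hρ0 k; linarith)).1 ⟨x, hx2⟩
    linarith
  have hZ0 : volume Z = 0 := by
    refine measure_mono_null ?_ (hZc.addHaar_frontier volume)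
    rw [frontier, hZi, sdiff_empty]
    exact subset_closure
  have hlim : Tendsto (fun k => volume (par Ω (ρ k))) atTop (nhds (volume Z)) := by
    refine tendsto_measure_iInter_atTop
      (fun k => (isOpen_par hΩo _).measurableSet.nullMeasurableSet)
      (fun i j hij => par_anti Ω (hρm hij))
      ⟨0, ((hΩb.subset (par_subset (hρ0 0).le)).measure_lt_top).ne⟩
  rw [hZ0] at hlim
  obtain ⟨k, hk⟩ := (hlim.eventually (gt_mem_nhds (ENNReal.ofReal_pos.2 hδ))).exists
  exact ⟨ρ k, ⟨hρ0 k, hρR k⟩, (ENNReal.lt_ofReal_iff_toReal_lt hk.ne_top).1 hk⟩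

theorem par_log_concave (hΩo : IsOpen Ω) (hΩb : Bornology.IsBounded Ω) (hΩc : Convex ℝ Ω)
    {r s α β : ℝ} (hr : 0 ≤ r) (hs : 0 ≤ s) (hα : 0 < α) (hβ : 0 < β) (hαβ : α + β = 1) :
    vol (par Ω r) ^ α * vol (par Ω s) ^ β ≤ vol (par Ω (α * r + β * s)) := by
  have h := volume_rpow_mul_le hα hβ hαβ (isOpen_par hΩo r).measurableSet
    (isOpen_par hΩo s).measurableSet (isOpen_par hΩo (α * r + β * s)).measurableSet
    (fun x hx y hy => par_combo hΩc hr hs hα.le hβ.le hαβ hx hy)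
  have h2 := ENNReal.toReal_mono
    (hΩb.subset (par_subset (by positivity : 0 ≤ α * r + β * s))).measure_lt_top.ne h
  rwa [ENNReal.toReal_mul, ← ENNReal.toReal_rpow, ← ENNReal.toReal_rpow] at h2

theorem existsUnique_par (hΩo : IsOpen Ω) (hΩb : Bornology.IsBounded Ω) (hΩc : Convex ℝ Ω)
    (hΩne : Ω.Nonempty) :
    ∃! r : ℝ, r ∈ Ioo 0 (inradius Ω) ∧ surf (par Ω r) / vol (par Ω r) = 1 / r := by
  have ne : ∀ {r}, 0 ≤ r → r < inradius Ω → (par Ω r).Nonempty := fun h0 hr =>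
    (par_nonempty_iff hΩo hΩb hΩne h0).2 hr
  obtain ⟨c, hc, hbd⟩ := par_bounds m
  have bd : ∀ {r : ℝ}, 0 < r → Bornology.IsBounded (par Ω r) := fun h => hΩb.subset (par_subset h.le)
  refine existsUnique_of_parallel_bounds (V := fun r => vol (par Ω r))
    (P := fun r => surf (par Ω r)) (c := c) (k := m + 1) (l := m)
    (inradius_pos hΩo hΩb hΩne) hc ?_ (fun r _ => ENNReal.toReal_nonneg) ?_ ?_ ?_ ?_ ?_ ?_ ?_ ?_
  · intro r hr
    exact ENNReal.toReal_pos ((isOpen_par hΩo r).measure_pos _ (ne hr.1.le hr.2)).ne'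
      (bd hr.1).measure_lt_top.ne
  · intro r hr s hs hrs
    exact ENNReal.toReal_mono (bd hr.1).measure_lt_top.ne (measure_mono (par_anti Ω hrs))
  · intro r hr s hs hrs
    exact ENNReal.toReal_mono (surf_lt_top hΩo hΩb hΩc hr.1 (ne hr.1.le hr.2)).ne
      (hausdorffMeasure_frontier_mono (by positivity) (isOpen_par hΩo s) (convex_par hΩc hs.1.le)
        (ne hs.1.le hs.2) (isOpen_par hΩo r) (bd hr.1) (par_anti Ω hrs))
  · intro a b s ha hab hbs hs
    exact (par_scaling hΩo hΩb hΩc ha hab hbs (ne (by linarith) hs)).1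
  · intro a b s ha hab hbs hs
    exact (par_scaling hΩo hΩb hΩc ha hab hbs (ne (by linarith) hs)).2
  · intro a b ε ha hab hε hb
    exact (hbd Ω hΩo hΩb hΩc a b ε ha hab hε (ne (by linarith) hb)).1
  · intro a b ε ha hab hε hb
    exact (hbd Ω hΩo hΩb hΩc a b ε ha hab hε (ne (by linarith) hb)).2
  · intro r hr s hs α β hα hβ hαβ
    exact par_log_concave hΩo hΩb hΩc hr.1.le hs.1.le hα hβ hαβ
  · intro δ hδ
    exact exists_vol_lt hΩo hΩb hΩc hΩne hδ

end final

theorem stmt_2 (n : ℕ) (hn : 2 ≤ n) (Ω : Set (EuclideanSpace ℝ (Fin n)))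
    (hΩo : IsOpen Ω) (hΩb : Bornology.IsBounded Ω) (hΩc : Convex ℝ Ω)
    (hΩne : Ω.Nonempty) :
    ∃! r : ℝ, r ∈ Set.Ioo 0 (inradius Ω) ∧
      perim (innerParallel Ω r) / (volume (innerParallel Ω r)).toReal = 1 / r := by
  obtain ⟨m, rfl⟩ : ∃ m, n = m + 1 := ⟨n - 1, by omega⟩
  have hdim : ((m + 1 : ℕ) : ℝ) - 1 = m := by push_cast; ring
  refine (existsUnique_congr fun r => and_congr_right fun hr => ?_).1
    (existsUnique_par hΩo hΩb hΩc hΩne)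
  rw [innerParallel_eq hΩo hΩb hΩne hr.1.le]
  unfold perim surf vol
  rw [hdim]
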